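/- Let n ≥ 2 be an integer and 0 < λ ≤ Λ real constants. Set σ := 1 − (λ/(λ+(n−1)Λ))^n · (1/(4√n))^n and M := 884736·n³·(36n)^{max{1, (n−1)Λ/λ − 1}}. Let Ω ⊆ ℝⁿ be an open set containing the closed ball of radius 2√n centered at 0, and let v : Ω → ℝ be a continuous viscosity supersolution of M⁻_{λ,Λ}(D²v) ≤ 0 in Ω with |v| ≤ 1/4 on Ω. Then for every real t > M, |A⁻_t(v,Ω) ∩ Q₁| ≤ σ^{−1}·t^{−ε} where ε := log(1/σ)/log M. -/

import Mathlib

open MeasureTheory Metric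
open scoped InnerProductSpace ENNReal

noncomputable section

abbrev Euc (n : ℕ) := EuclideanSpace ℝ (Fin n)

/-- Loewner order -/
def matLE {n : ℕ} (A B : Matrix (Fin n) (Fin n) ℝ) : Prop := (B - A).PosSemidef

/-- Pucci minimal operator -/
def pucciInf {n : ℕ} (lam Lam : ℝ) (M : Matrix (Fin n) (Fin n) ℝ) : ℝ :=
  sInf {t : ℝ | ∃ A : Matrix (Fin n) (Fin n) ℝ,
    A.IsSymm ∧ matLE (lam • 1) A ∧ matLE A (Lam • 1) ∧ t = (A * M).trace}

/-- Hessian matrix via second iterated Fréchet derivative -/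
def hessianMatrix {n : ℕ} (φ : Euc n → ℝ) (x : Euc n) : Matrix (Fin n) (Fin n) ℝ :=
  Matrix.of fun i j =>
    iteratedFDeriv ℝ 2 φ x ![EuclideanSpace.single i 1, EuclideanSpace.single j 1]

/-- viscosity supersolution of M⁻(D²v) ≤ 0 -/
def ViscSupersol {n : ℕ} (lam Lam : ℝ) (Ω : Set (Euc n)) (v : Euc n → ℝ) : Prop :=
  ∀ x₀ ∈ Ω, ∀ φ : Euc n → ℝ,
    (∃ U : Set (Euc n), IsOpen U ∧ x₀ ∈ U ∧ ContDiffOn ℝ 2 φ U) →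
    IsLocalMinOn (fun x => v x - φ x) Ω x₀ →
    pucciInf lam Lam (hessianMatrix φ x₀) ≤ 0

def Gm {n : ℕ} (K : ℝ) (v : Euc n → ℝ) (Ω : Set (Euc n)) : Set (Euc n) :=
  {xb | xb ∈ Ω ∧ ∃ p : Euc n, ∀ x ∈ Ω, v x ≥ v xb + ⟪p, x - xb⟫_ℝ - K / 2 * ‖x - xb‖ ^ 2}

def Am {n : ℕ} (K : ℝ) (v : Euc n → ℝ) (Ω : Set (Euc n)) : Set (Euc n) := Ω \ Gm K v Ω

/-- open cube of side r centered at x -/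
def cube {n : ℕ} (r : ℝ) (x : Euc n) : Set (Euc n) := {y | ∀ i, |y i - x i| < r / 2}


lemma quad_hess_gen {E ι : Type*} [NormedAddCommGroup E] [InnerProductSpace ℝ E] [Fintype ι]
    (b : ι → E) (μ : ι → ℝ) (p x₀ h1 h2 : E) :
    iteratedFDeriv ℝ 2 (fun x => ⟪p, x - x₀⟫_ℝ + 1/2 * ∑ i, μ i * ⟪b i, x - x₀⟫_ℝ ^ 2) x₀ ![h1, h2]
      = ∑ i, μ i * (⟪b i, h1⟫_ℝ * ⟪b i, h2⟫_ℝ) := by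
  have hin0 : ∀ x, ∀ q : E, HasFDerivAt (fun x => ⟪q, x - x₀⟫_ℝ) (innerSL ℝ q) x := by
    intro x q
    exact ((innerSL ℝ q).hasFDerivAt (x := x - x₀)).comp x ((hasFDerivAt_id x).sub_const x₀)
  have h1 : ∀ x, HasFDerivAt (fun x => ⟪p, x - x₀⟫_ℝ + 1/2 * ∑ i, μ i * ⟪b i, x - x₀⟫_ℝ ^ 2)
      (innerSL ℝ p + ∑ i, (μ i * ⟪b i, x - x₀⟫_ℝ) • innerSL ℝ (b i)) x := by
    intro x
    have hin := hin0 x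
    have h2 : HasFDerivAt (fun x => ∑ i, μ i * ⟪b i, x - x₀⟫_ℝ ^ 2)
      (∑ i, μ i • ((2 * ⟪b i, x - x₀⟫_ℝ) • innerSL ℝ (b i))) x := by
      apply HasFDerivAt.fun_sum
      intro i _
      have := ((hin (b i)).pow 2).const_mul (μ i)
      simpa using this
    have h3 := (hin p).add (h2.const_mul (1/2 : ℝ))
    refine HasFDerivAt.congr_fderiv h3 ?_
    rw [Finset.smul_sum]
    congr 1
    apply Finset.sum_congr rfl
    intro i _
    rw [smul_smul, smul_smul]
    congr 1
    ring
  have h2 : fderiv ℝ (fun x => ⟪p, x - x₀⟫_ℝ + 1/2 * ∑ i, μ i * ⟪b i, x - x₀⟫_ℝ ^ 2)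
      = fun x => innerSL ℝ p + ∑ i, (μ i * ⟪b i, x - x₀⟫_ℝ) • innerSL ℝ (b i) := by
    funext x
    exact (h1 x).fderiv
  have h3 : HasFDerivAt (fun x => innerSL ℝ p + ∑ i, (μ i * ⟪b i, x - x₀⟫_ℝ) • innerSL ℝ (b i))
      (∑ i, (μ i • innerSL ℝ (b i)).smulRight (innerSL ℝ (b i))) x₀ := by
    apply HasFDerivAt.const_add
    apply HasFDerivAt.fun_sum
    intro i _
    refine HasFDerivAt.smul_const (c := fun y => μ i * ⟪b i, y - x₀⟫_ℝ) (F := E →L[ℝ] ℝ) ?_ (innerSL ℝ (b i))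
    apply HasFDerivAt.const_mul
    exact hin0 x₀ (b i)
  rw [iteratedFDeriv_two_apply, h2, h3.fderiv]
  simp [mul_assoc]

lemma quad_contDiff {E ι : Type*} [NormedAddCommGroup E] [InnerProductSpace ℝ E] [Fintype ι]
    (b : ι → E) (μ : ι → ℝ) (p x₀ : E) :
    ContDiff ℝ 2 (fun x => ⟪p, x - x₀⟫_ℝ + 1/2 * ∑ i, μ i * ⟪b i, x - x₀⟫_ℝ ^ 2) := by
  have hin : ∀ q : E, ContDiff ℝ 2 (fun x => ⟪q, x - x₀⟫_ℝ) := by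
    intro q
    exact contDiff_const.inner ℝ (contDiff_id.sub contDiff_const)
  refine (hin p).add (contDiff_const.mul (ContDiff.sum ?_))
  intro i _
  exact contDiff_const.mul ((hin _).pow 2)

lemma quad_hess {n : ℕ} (b : OrthonormalBasis (Fin n) ℝ (Euc n)) (μ : Fin n → ℝ) (p x₀ : Euc n)
    (k l : Fin n) :
    hessianMatrix (fun x => ⟪p, x - x₀⟫_ℝ + 1/2 * ∑ i, μ i * ⟪b i, x - x₀⟫_ℝ ^ 2) x₀ k l
      = ∑ i, μ i * (b i k * b i l) := by
  unfold hessianMatrix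
  rw [Matrix.of_apply]
  have := quad_hess_gen (fun i => b i) μ p x₀ (EuclideanSpace.single k 1) (EuclideanSpace.single l 1)
  refine this.trans ?_
  apply Finset.sum_congr rfl
  intro i _
  have hh : ∀ k, ⟪b i, (EuclideanSpace.single k (1:ℝ))⟫_ℝ = b i k := by
    intro k
    rw [EuclideanSpace.inner_single_right]
    simp
  rw [hh, hh]

lemma visc_quad {n : ℕ} {lam Lam : ℝ} (hlam : 0 < lam) (hLam : lam ≤ Lam)
    {Ω : Set (Euc n)} {v : Euc n → ℝ} (hs : ViscSupersol lam Lam Ω v)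
    {x₀ : Euc n} (hx : x₀ ∈ Ω) (b : OrthonormalBasis (Fin n) ℝ (Euc n)) (μ : Fin n → ℝ) {κ : ℝ}
    (hκ : 0 ≤ κ) (hμ : ∀ i, -κ ≤ μ i) (p : Euc n)
    (hlow : ∀ᶠ x in nhds x₀, x ∈ Ω → v x ≥ v x₀ + ⟪p, x - x₀⟫_ℝ + 1/2 * ∑ i, μ i * ⟪b i, x - x₀⟫_ℝ ^ 2)
    (j : Fin n) : lam * μ j ≤ ((n : ℝ) - 1) * Lam * κ := by
  have hP := hs x₀ hx (fun x => ⟪p, x - x₀⟫_ℝ + 1/2 * ∑ i, μ i * ⟪b i, x - x₀⟫_ℝ ^ 2)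
    ⟨Set.univ, isOpen_univ, trivial, by
      apply ContDiff.contDiffOn
      exact quad_contDiff _ _ _ _⟩ (by
      unfold IsLocalMinOn IsMinFilter
      rw [eventually_nhdsWithin_iff]
      filter_upwards [hlow] with x h1 h2
      have := h1 h2
      simp only [sub_self, inner_zero_right]
      norm_num
      linarith)
  have hn1 : (1:ℝ) ≤ n := by
    have : 1 ≤ n := Nat.one_le_of_lt (Fin.pos j)
    exact_mod_cast this
  by_cases hj : μ j < 0
  · have : 0 ≤ ((n : ℝ) - 1) * Lam * κ := by
      apply mul_nonneg (mul_nonneg (by linarith) (by linarith)) hκ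
    nlinarith
  push Not at hj
  refine le_of_forall_pos_lt_add ?_
  intro ε hε
  unfold pucciInf at hP
  obtain ⟨t, ⟨A, hA, hA1, hA2, rfl⟩, ht⟩ := exists_lt_of_csInf_lt (s := {t : ℝ | ∃ A : Matrix (Fin n) (Fin n) ℝ,
    A.IsSymm ∧ matLE (lam • 1) A ∧ matLE A (Lam • 1) ∧ t = (A * hessianMatrix (fun x => ⟪p, x - x₀⟫_ℝ + 1/2 * ∑ i, μ i * ⟪b i, x - x₀⟫_ℝ ^ 2) x₀).trace}) (b := ε) (by
      refine ⟨_, lam • 1, ?_, ?_, ?_, rfl⟩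
      · simp [Matrix.IsSymm]
      · unfold matLE; rw [sub_self]; exact Matrix.PosSemidef.zero
      · unfold matLE
        rw [← sub_smul]
        exact Matrix.PosSemidef.one.smul (by linarith)) (lt_of_le_of_lt hP hε)
  set q : Fin n → ℝ := fun i => (b i).ofLp ⬝ᵥ (A.mulVec (b i).ofLp) with hq
  have hbb : ∀ i, (b i).ofLp ⬝ᵥ (b i).ofLp = 1 := by
    intro i
    have := b.orthonormal.1 i
    have h2 : ⟪b i, b i⟫_ℝ = 1 := by rw [real_inner_self_eq_norm_sq, this]; norm_num
    rw [EuclideanSpace.inner_eq_star_dotProduct] at h2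
    exact h2
  have htr : (A * hessianMatrix (fun x => ⟪p, x - x₀⟫_ℝ + 1/2 * ∑ i, μ i * ⟪b i, x - x₀⟫_ℝ ^ 2) x₀).trace
      = ∑ i, μ i * q i := by
    simp only [Matrix.trace, Matrix.diag_apply, Matrix.mul_apply, quad_hess, hq, dotProduct,
      Matrix.mulVec]
    simp only [Finset.mul_sum]
    rw [Finset.sum_congr rfl (fun x _ => Finset.sum_comm), Finset.sum_comm]
    apply Finset.sum_congr rfl
    intro i _
    apply Finset.sum_congr rfl
    intro k _
    apply Finset.sum_congr rfl
    intro l _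
    ring
  have hq1 : ∀ i, lam ≤ q i := by
    intro i
    have := hA1.dotProduct_mulVec_nonneg (b i).ofLp
    simp only [star_trivial, Matrix.sub_mulVec, dotProduct_sub, Matrix.smul_mulVec,
      Matrix.one_mulVec, dotProduct_smul, hbb] at this
    simp only [hq]
    simp at this
    linarith
  have hq2 : ∀ i, q i ≤ Lam := by
    intro i
    have := hA2.dotProduct_mulVec_nonneg (b i).ofLp
    simp only [star_trivial, Matrix.sub_mulVec, dotProduct_sub, Matrix.smul_mulVec,
      Matrix.one_mulVec, dotProduct_smul, hbb] at this
    simp only [hq]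
    simp at this
    linarith
  rw [htr, ← Finset.add_sum_erase _ _ (Finset.mem_univ j)] at ht
  have h1 : ∑ i ∈ Finset.univ.erase j, (-(κ * Lam)) ≤ ∑ i ∈ Finset.univ.erase j, μ i * q i := by
    apply Finset.sum_le_sum
    intro i _
    have := hq1 i; have := hq2 i; have := hμ i
    nlinarith
  rw [Finset.sum_const, Finset.card_erase_of_mem (Finset.mem_univ j), Finset.card_univ, Fintype.card_fin,
    nsmul_eq_mul, Nat.cast_sub (by exact_mod_cast hn1)] at h1
  have h2 : lam * μ j ≤ μ j * q j := by
    have := hq1 j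
    nlinarith
  push_cast at h1
  nlinarith

/-- one special direction -/
lemma visc_dir {n : ℕ} {lam Lam : ℝ} (hlam : 0 < lam) (hLam : lam ≤ Lam)
    {Ω : Set (Euc n)} {v : Euc n → ℝ} (hs : ViscSupersol lam Lam Ω v)
    {x₀ : Euc n} (hx : x₀ ∈ Ω) {e : Euc n} (he : ‖e‖ = 1) {N κ : ℝ} (hN : 0 ≤ N)
    (hκ : 0 ≤ κ) (p : Euc n)
    (hlow : ∀ᶠ x in nhds x₀, x ∈ Ω → v x ≥ v x₀ + ⟪p, x - x₀⟫_ℝ + 1/2 * (N * ⟪e, x - x₀⟫_ℝ ^ 2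
      - κ * ‖x - x₀‖ ^ 2)) : lam * (N - κ) ≤ ((n : ℝ) - 1) * Lam * κ := by
  have hn : 0 < n := by
    rcases Nat.eq_zero_or_pos n with h | h
    · subst h
      have : e = 0 := Subsingleton.elim _ _
      simp [this] at he
    · exact h
  let j : Fin n := ⟨0, hn⟩
  obtain ⟨b, hb⟩ := Orthonormal.exists_orthonormalBasis_extension_of_card_eq (𝕜 := ℝ) (E := Euc n) (ι := Fin n)
    (by simp) (v := fun _ => e) (s := {j}) (by
      constructor
      · intro i; simp [he]
      · intro i k hik
        exact absurd (Subsingleton.elim i k) hik)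
  have hbj := hb j rfl
  have := visc_quad hlam hLam hs hx b (fun i => (if i = j then N else 0) - κ) hκ (by
    intro i
    split_ifs <;> linarith) p (by
    filter_upwards [hlow] with x h1 h2
    have h3 := h1 h2
    have h4 : ∑ i, ((if i = j then N else 0) - κ) * ⟪b i, x - x₀⟫_ℝ ^ 2
        = (N * ⟪e, x - x₀⟫_ℝ ^ 2 - κ * ‖x - x₀‖ ^ 2) := by
      simp only [sub_mul, Finset.sum_sub_distrib, ite_mul, zero_mul, Finset.sum_ite_eq',
        Finset.mem_univ, if_true, hbj, ← Finset.mul_sum]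
      rw [← b.sum_sq_norm_inner_right (x - x₀)]
      simp
    rw [h4]
    exact h3) j
  simpa using this

section prox
variable {E : Type*} [NormedAddCommGroup E] [InnerProductSpace ℝ E]

lemma prox_exists [FiniteDimensional ℝ E]
    {Γ : E → ℝ} (hc : ConvexOn ℝ Set.univ Γ) (hcont : Continuous Γ) (R : ℝ)
    (hR : ∀ x, Γ 0 - R * ‖x‖ ≤ Γ x) (z : E) :
    ∃ x0, ∀ x, Γ x ≥ Γ x0 + ⟪z - x0, x - x0⟫_ℝ := by
  have hf : Continuous (fun x => Γ x + 1/2 * ‖x - z‖ ^ 2) := by fun_prop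
  obtain ⟨x0, hx0⟩ := hf.exists_forall_le' 0 (by
    filter_upwards [tendsto_norm_cocompact_atTop.eventually_ge_atTop (2 * (|R| + ‖z‖))] with x hx
    have h1 := hR x
    have h2 : |‖x‖ - ‖z‖| ≤ ‖x - z‖ := abs_norm_sub_norm_le x z
    have h3 : (‖x‖ - ‖z‖) ^ 2 ≤ ‖x - z‖ ^ 2 := by
      rw [← sq_abs (‖x‖ - ‖z‖)]
      exact pow_le_pow_left₀ (abs_nonneg _) h2 2
    simp only [zero_sub, norm_neg]
    have h4 := le_abs_self R
    have h5 := norm_nonneg x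
    have h6 : R * ‖x‖ ≤ |R| * ‖x‖ := mul_le_mul_of_nonneg_right h4 h5
    nlinarith)
  refine ⟨x0, fun x => ?_⟩
  by_contra hcon
  push Not at hcon
  have key : ∀ t : ℝ, 0 < t → t ≤ 1 →
      0 ≤ Γ x - Γ x0 - ⟪z - x0, x - x0⟫_ℝ + t / 2 * ‖x - x0‖ ^ 2 := by
    intro t ht ht1
    have h1 := hx0 ((1 - t) • x0 + t • x)
    have h2 := hc.2 (Set.mem_univ x0) (Set.mem_univ x) (by linarith : 0 ≤ 1 - t) ht.le (by ring)
    have h3 : (1 - t) • x0 + t • x - z = (x0 - z) + t • (x - x0) := by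
      rw [sub_smul, one_smul, smul_sub]; abel
    have h4 : ‖(x0 - z) + t • (x - x0)‖ ^ 2 = ‖x0 - z‖ ^ 2 - 2 * t * ⟪z - x0, x - x0⟫_ℝ
        + t ^ 2 * ‖x - x0‖ ^ 2 := by
      rw [norm_add_sq_real, inner_smul_right, norm_smul, Real.norm_eq_abs, mul_pow, sq_abs,
        ← neg_sub z x0, inner_neg_left, norm_neg]
      ring
    simp only [h3, h4, smul_eq_mul] at h1 h2
    have h5 : 0 ≤ t * (Γ x - Γ x0 - ⟪z - x0, x - x0⟫_ℝ + t / 2 * ‖x - x0‖ ^ 2) := by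
      nlinarith
    exact nonneg_of_mul_nonneg_right h5 ht
  set c := Γ x0 + ⟪z - x0, x - x0⟫_ℝ - Γ x with hcdef
  have hcpos : 0 < c := by linarith
  set D := ‖x - x0‖ ^ 2 with hD
  have hD0 : 0 ≤ D := by positivity
  have ht : 0 < min 1 (c / (D + 1)) := lt_min one_pos (by positivity)
  have := key _ ht (min_le_left _ _)
  have h2 : min 1 (c / (D + 1)) * D ≤ c := by
    calc min 1 (c / (D + 1)) * D ≤ (c / (D+1)) * (D + 1) := by
          apply mul_le_mul (min_le_right _ _) (by linarith) hD0 (by positivity)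
      _ = c := by field_simp
  nlinarith

lemma prox_mono {Γ : E → ℝ} {X : E → E}
    (hX : ∀ z x, Γ x ≥ Γ (X z) + ⟪z - X z, x - X z⟫_ℝ) (z z' : E) : 0 ≤ ⟪(z - X z) - (z' - X z'), X z - X z'⟫_ℝ := by
  have h1 := hX z (X z')
  have h2 := hX z' (X z)
  have h3 : ⟪z - X z, X z' - X z⟫_ℝ = - ⟪z - X z, X z - X z'⟫_ℝ := by
    rw [← inner_neg_right, neg_sub]
  rw [inner_sub_left]
  linarith

lemma prox_lip {Γ : E → ℝ} {X : E → E}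
    (hX : ∀ z x, Γ x ≥ Γ (X z) + ⟪z - X z, x - X z⟫_ℝ) (z z' : E) : ‖X z - X z'‖ ≤ ‖z - z'‖ := by
  have h := prox_mono hX z z'
  have h1 : (z - X z) - (z' - X z') = (z - z') - (X z - X z') := by abel
  rw [h1, inner_sub_left, real_inner_self_eq_norm_sq] at h
  have h2 := real_inner_le_norm (z - z') (X z - X z')
  have h3 := norm_nonneg (X z - X z')
  by_contra hc
  push Not at hc
  nlinarith [norm_nonneg (z - z')]

lemma prox_lip' {Γ : E → ℝ} {X : E → E}
    (hX : ∀ z x, Γ x ≥ Γ (X z) + ⟪z - X z, x - X z⟫_ℝ) (z z' : E) : ‖(z - X z) - (z' - X z')‖ ≤ ‖z - z'‖ := by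
  have h := prox_mono hX z z'
  have h1 : X z - X z' = (z - z') - ((z - X z) - (z' - X z')) := by abel
  rw [h1, inner_sub_right, real_inner_self_eq_norm_sq] at h
  have h2 := real_inner_le_norm ((z - X z) - (z' - X z')) (z - z')
  have h3 := norm_nonneg ((z - X z) - (z' - X z'))
  by_contra hc
  push Not at hc
  nlinarith [norm_nonneg (z - z')]

lemma prox_env_le {Γ : E → ℝ} {X : E → E}
    (hX : ∀ z x, Γ x ≥ Γ (X z) + ⟪z - X z, x - X z⟫_ℝ) (z x : E) : Γ (X z) + 1/2 * ‖z - X z‖ ^ 2 ≤ Γ x + 1/2 * ‖z - x‖ ^ 2 := by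
  have h := hX z x
  have h1 : z - x = (z - X z) - (x - X z) := by abel
  have h2 : ‖z - x‖ ^ 2 = ‖z - X z‖ ^ 2 - 2 * ⟪z - X z, x - X z⟫_ℝ + ‖x - X z‖ ^ 2 := by rw [h1, norm_sub_sq_real]
  rw [h2]
  nlinarith [sq_nonneg ‖x - X z‖]

lemma prox_env_deriv {Γ : E → ℝ} {X : E → E}
    (hX : ∀ z x, Γ x ≥ Γ (X z) + ⟪z - X z, x - X z⟫_ℝ) (z : E) :
    HasFDerivAt (fun z => Γ (X z) + 1/2 * ‖z - X z‖ ^ 2) (innerSL ℝ (z - X z)) z := by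
  have up : ∀ z z', (Γ (X z') + 1/2 * ‖z' - X z'‖ ^ 2) - (Γ (X z) + 1/2 * ‖z - X z‖ ^ 2) ≤
      ⟪z - X z, z' - z⟫_ℝ + 1/2 * ‖z' - z‖ ^ 2 := by
    intro z z'
    have h := prox_env_le hX z' (X z)
    have h1 : z' - X z = (z - X z) + (z' - z) := by abel
    rw [h1, norm_add_sq_real] at h
    linarith
  rw [hasFDerivAt_iff_isLittleO, Asymptotics.isLittleO_iff]
  intro c hc
  filter_upwards [Metric.ball_mem_nhds z hc] with z' hz'
  rw [Metric.mem_ball, dist_eq_norm] at hz'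
  simp only [innerSL_apply_apply]
  have h1 := up z z'
  have h2 := up z' z
  have h3 : ⟪z' - X z', z - z'⟫_ℝ = -⟪z' - X z', z' - z⟫_ℝ := by
    rw [← inner_neg_right, neg_sub]
  have h4 : ⟪z - X z, z' - z⟫_ℝ ≤ ⟪z' - X z', z' - z⟫_ℝ := by
    have := prox_mono hX z' z
    have e1 : X z' - X z = (z' - z) - ((z' - X z') - (z - X z)) := by abel
    rw [e1, inner_sub_right, real_inner_self_eq_norm_sq, inner_sub_left] at this
    nlinarith [sq_nonneg ‖(z' - X z') - (z - X z)‖]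
  have h5 : ‖z - z'‖ = ‖z' - z‖ := norm_sub_rev _ _
  rw [h5, h3] at h2
  have h6 := norm_nonneg (z' - z)
  rw [Real.norm_eq_abs, abs_le]
  constructor <;> nlinarith

lemma grad_symm {e : E → ℝ} {Y : E → E} (he : ∀ z, HasFDerivAt e (innerSL ℝ (Y z)) z)
    {T : E →L[ℝ] E} {z₀ : E} (hY : HasFDerivAt Y T z₀) (v w : E) : ⟪T v, w⟫_ℝ = ⟪T w, v⟫_ℝ := by
  have h := second_derivative_symmetric he
    (f'' := (innerSL ℝ : E →L[ℝ] E →L[ℝ] ℝ).comp T) (x := z₀)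
    (((innerSL ℝ : E →L[ℝ] E →L[ℝ] ℝ).hasFDerivAt).comp z₀ hY) v w
  simpa using h

lemma taylor2 {e : E → ℝ} {Y : E → E} {z₀ : E} (he : ∀ᶠ z in nhds z₀, HasFDerivAt e (innerSL ℝ (Y z)) z)
    {T : E →L[ℝ] E} (hY : HasFDerivAt Y T z₀) (hs : ∀ v w, ⟪T v, w⟫_ℝ = ⟪T w, v⟫_ℝ)
    {ε : ℝ} (hε : 0 < ε) :
    ∀ᶠ z in nhds z₀, |e z - e z₀ - ⟪Y z₀, z - z₀⟫_ℝ - 1/2 * ⟪T (z - z₀), z - z₀⟫_ℝ| ≤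
      ε * ‖z - z₀‖ ^ 2 := by
  have h1 := hasFDerivAt_iff_isLittleO.1 hY
  rw [Asymptotics.isLittleO_iff] at h1
  have h2 := h1 hε
  obtain ⟨δ, hδ, h3⟩ := Metric.eventually_nhds_iff_ball.1 (h2.and he)
  filter_upwards [Metric.ball_mem_nhds z₀ hδ] with z hz
  rw [Metric.mem_ball, dist_eq_norm] at hz
  have hg : ∀ x ∈ Metric.closedBall z₀ ‖z - z₀‖, HasFDerivWithinAt
      (fun z => e z - ⟪Y z₀, z - z₀⟫_ℝ - 1/2 * ⟪T (z - z₀), z - z₀⟫_ℝ)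
      (innerSL ℝ (Y x - Y z₀ - T (x - z₀))) (Metric.closedBall z₀ ‖z - z₀‖) x := by
    intro x hx
    have hxb : x ∈ Metric.ball z₀ δ := by
      rw [Metric.mem_closedBall] at hx; rw [Metric.mem_ball]; linarith
    apply HasFDerivAt.hasFDerivWithinAt
    have a1 : HasFDerivAt (fun z => z - z₀) (ContinuousLinearMap.id ℝ E) x := (hasFDerivAt_id x).sub_const z₀
    have a2 : HasFDerivAt (fun z => ⟪Y z₀, z - z₀⟫_ℝ) (innerSL ℝ (Y z₀)) x := by
      have a0 := ((innerSL ℝ (Y z₀)).hasFDerivAt (x := x - z₀)).comp x a1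
      exact a0
    have a3 : HasFDerivAt (fun z => T (z - z₀)) T x := (T.hasFDerivAt (x := x - z₀)).comp x a1
    have a4 := a3.inner ℝ a1
    have a5 := (((h3 x hxb).2).sub a2).sub (a4.const_mul (1/2 : ℝ))
    refine HasFDerivAt.congr_fderiv a5 ?_
    ext w
    simp [inner_sub_left]
    have := hs w (x - z₀)
    rw [map_sub, inner_sub_left] at this
    linarith
  have h4 := Convex.norm_image_sub_le_of_norm_hasFDerivWithin_le (C := ε * ‖z - z₀‖) hg (by
    intro x hx
    have hxb : x ∈ Metric.ball z₀ δ := by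
      rw [Metric.mem_closedBall] at hx; rw [Metric.mem_ball]; linarith
    rw [innerSL_apply_norm]
    refine (h3 x hxb).1.trans ?_
    rw [Metric.mem_closedBall, dist_eq_norm] at hx
    exact mul_le_mul_of_nonneg_left hx hε.le) (convex_closedBall _ _)
    (x := z₀) (y := z) (Metric.mem_closedBall_self (norm_nonneg _)) (by
      rw [Metric.mem_closedBall, dist_eq_norm])
  simp only [sub_self, inner_zero_right, map_zero, mul_zero, sub_zero, Real.norm_eq_abs] at h4
  rw [show e z - e z₀ - ⟪Y z₀, z - z₀⟫_ℝ - 1/2 * ⟪T (z - z₀), z - z₀⟫_ℝ =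
    e z - ⟪Y z₀, z - z₀⟫_ℝ - 1/2 * ⟪T (z - z₀), z - z₀⟫_ℝ - e z₀ by ring]
  calc _ ≤ _ := h4
    _ = _ := by ring

end prox

/-- second order lower expansion of `Γ` at a point where its proximal map is differentiable -/
lemma prox_second {E : Type*} [NormedAddCommGroup E] [InnerProductSpace ℝ E]
    {n : ℕ} {Γ : E → ℝ} {X : E → E}
    (hX : ∀ z x, Γ x ≥ Γ (X z) + ⟪z - X z, x - X z⟫_ℝ) {S : E →L[ℝ] E} {z₀ : E}
    (hS : HasFDerivAt X S z₀) (hsym : ∀ v w, ⟪S v, w⟫_ℝ = ⟪S w, v⟫_ℝ)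
    (b : OrthonormalBasis (Fin n) ℝ E) (s : Fin n → ℝ)
    (hb : ∀ i, S (b i) = s i • b i) (N : ℝ) {ε : ℝ} (hε : 0 < ε) :
    ∀ᶠ x in nhds (X z₀), Γ x ≥ Γ (X z₀) + ⟪z₀ - X z₀, x - X z₀⟫_ℝ
      + 1/2 * ∑ i, (if s i = 0 then 2 * N - 1 else (1 - s i) / s i) * ⟪b i, x - X z₀⟫_ℝ ^ 2
      - ε * ‖x - X z₀‖ ^ 2 := by
  set κ : Fin n → ℝ := fun i => if s i = 0 then N else 1 / s i with hκ
  set k : E → E := fun h => ∑ i, (κ i * ⟪b i, h⟫_ℝ) • b i with hk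
  have hkc : Continuous k := by
    rw [hk]; fun_prop
  have hbk : ∀ h i, ⟪b i, k h⟫_ℝ = κ i * ⟪b i, h⟫_ℝ := by
    intro h i
    simp only [hk]
    exact b.orthonormal.inner_right_fintype _ i
  set D : ℝ := ∑ i, κ i ^ 2 with hD
  have hD0 : 0 ≤ D := Finset.sum_nonneg (fun i _ => sq_nonneg _)
  have hnorm : ∀ h : E, ‖h‖ ^ 2 = ∑ i, ⟪b i, h⟫_ℝ ^ 2 := by
    intro h
    rw [← b.sum_sq_norm_inner_right h]; simp
  have hkD : ∀ h, ‖k h‖ ^ 2 ≤ D * ‖h‖ ^ 2 := by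
    intro h
    rw [hnorm (k h), hD, Finset.sum_mul]
    apply Finset.sum_le_sum
    intro i _
    rw [hbk, mul_pow]
    apply mul_le_mul_of_nonneg_left _ (sq_nonneg _)
    rw [hnorm]
    exact Finset.single_le_sum (f := fun i => ⟪b i, h⟫_ℝ ^ 2) (fun i _ => sq_nonneg _) (Finset.mem_univ i)
  have hT : HasFDerivAt (fun z => z - X z) (ContinuousLinearMap.id ℝ E - S) z₀ :=
    (hasFDerivAt_id z₀).sub hS
  have hε' : 0 < ε / (D + 1) := by positivity
  have ht := taylor2 (Filter.Eventually.of_forall (prox_env_deriv hX)) hT (by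
    intro v w
    simp only [ContinuousLinearMap.sub_apply, ContinuousLinearMap.id_apply, inner_sub_left]
    rw [hsym v w, real_inner_comm]) hε'
  have hcont : Filter.Tendsto (fun x => z₀ + k (x - X z₀)) (nhds (X z₀)) (nhds z₀) := by
    have h0 : k 0 = 0 := by simp [hk]
    have hc : Continuous (fun x => z₀ + k (x - X z₀)) := by fun_prop
    have := hc.tendsto (X z₀)
    simpa [h0] using this
  filter_upwards [hcont.eventually ht] with x hx
  set h := x - X z₀ with hh
  simp only [add_sub_cancel_left] at hx
  have h1 := (abs_le.1 hx).1
  have h2 := prox_env_le hX (z₀ + k h) x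
  have h3 : ‖z₀ + k h - x‖ ^ 2 = ‖z₀ - X z₀‖ ^ 2 + 2 * ⟪z₀ - X z₀, k h⟫_ℝ - 2 * ⟪z₀ - X z₀, h⟫_ℝ
      + ‖k h - h‖ ^ 2 := by
    have : z₀ + k h - x = (z₀ - X z₀) + (k h - h) := by rw [hh]; abel
    rw [this, norm_add_sq_real, inner_sub_right]; ring
  have h4 : ‖k h - h‖ ^ 2 = ‖k h‖ ^ 2 - 2 * ⟪k h, h⟫_ℝ + ‖h‖ ^ 2 := norm_sub_sq_real _ _
  have h5 : ⟪(ContinuousLinearMap.id ℝ E - S) (k h), k h⟫_ℝ = ‖k h‖ ^ 2 - ⟪S (k h), k h⟫_ℝ := by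
    simp only [ContinuousLinearMap.sub_apply, ContinuousLinearMap.id_apply, inner_sub_left,
      real_inner_self_eq_norm_sq]
  have h6 : ⟪k h, h⟫_ℝ = ∑ i, κ i * ⟪b i, h⟫_ℝ ^ 2 := by
    rw [← b.sum_inner_mul_inner]
    apply Finset.sum_congr rfl
    intro i _
    rw [real_inner_comm, hbk]; ring
  have h7 : ⟪S (k h), k h⟫_ℝ = ∑ i, s i * κ i ^ 2 * ⟪b i, h⟫_ℝ ^ 2 := by
    rw [← b.sum_inner_mul_inner]
    apply Finset.sum_congr rfl
    intro i _
    rw [hsym, hb, inner_smul_left, hbk]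
    simp; ring
  have h8 : 2 * ⟪k h, h⟫_ℝ - ⟪S (k h), k h⟫_ℝ - ‖h‖ ^ 2 =
      ∑ i, (if s i = 0 then 2 * N - 1 else (1 - s i) / s i) * ⟪b i, h⟫_ℝ ^ 2 := by
    rw [h6, h7, hnorm h, Finset.mul_sum, ← Finset.sum_sub_distrib, ← Finset.sum_sub_distrib]
    apply Finset.sum_congr rfl
    intro i _
    simp only [hκ]
    split_ifs with hi
    · rw [hi]; ring
    · field_simp; ring
  have h9 : ε / (D + 1) * ‖k h‖ ^ 2 ≤ ε * ‖h‖ ^ 2 := by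
    have : ‖k h‖ ^ 2 ≤ (D + 1) * ‖h‖ ^ 2 := by nlinarith [hkD h, sq_nonneg ‖h‖]
    calc ε / (D + 1) * ‖k h‖ ^ 2 ≤ ε / (D + 1) * ((D + 1) * ‖h‖ ^ 2) :=
          mul_le_mul_of_nonneg_left this hε'.le
      _ = ε * ‖h‖ ^ 2 := by field_simp
  rw [← h8]
  rw [h5] at h1
  rw [h3, h4] at h2
  linarith

lemma eig_range {E : Type*} [NormedAddCommGroup E] [InnerProductSpace ℝ E]
    {Γ : E → ℝ} {X : E → E}
    (hX : ∀ z x, Γ x ≥ Γ (X z) + ⟪z - X z, x - X z⟫_ℝ) {S : E →L[ℝ] E} {z₀ : E}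
    (hS : HasFDerivAt X S z₀) {u : E} (hu : ‖u‖ = 1) {s : ℝ} (hs : S u = s • u) :
    0 ≤ s ∧ s ≤ 1 := by
  have hT : HasFDerivAt (fun z => z - X z) (ContinuousLinearMap.id ℝ E - S) z₀ :=
    (hasFDerivAt_id z₀).sub hS
  have h1 : ‖S‖ ≤ 1 := hS.le_of_lip' zero_le_one (Filter.Eventually.of_forall (fun z => by
    rw [one_mul]; exact prox_lip hX z z₀))
  have h2 : ‖ContinuousLinearMap.id ℝ E - S‖ ≤ 1 := hT.le_of_lip' zero_le_one (Filter.Eventually.of_forall (fun z => by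
    rw [one_mul]; exact prox_lip' hX z z₀))
  have h3 := (S.le_opNorm u)
  have h4 := ((ContinuousLinearMap.id ℝ E - S).le_opNorm u)
  have h5 : (ContinuousLinearMap.id ℝ E - S) u = (1 - s) • u := by
    simp [hs, sub_smul]
  rw [hs, norm_smul, hu, Real.norm_eq_abs] at h3
  rw [h5, norm_smul, hu, Real.norm_eq_abs] at h4
  have h6 : |s| ≤ 1 := by linarith
  have h7 : |1 - s| ≤ 1 := by linarith
  rw [abs_le] at h6 h7
  constructor <;> linarith

lemma det_of_eig {E : Type*} [NormedAddCommGroup E] [InnerProductSpace ℝ E]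
    {n : ℕ} (b : OrthonormalBasis (Fin n) ℝ E) (T : E →L[ℝ] E) (s : Fin n → ℝ)
    (h : ∀ i, T (b i) = s i • b i) : T.det = ∏ i, s i := by
  have : LinearMap.toMatrix b.toBasis b.toBasis (T : E →ₗ[ℝ] E) = Matrix.diagonal s := by
    ext i j
    rw [LinearMap.toMatrix_apply]
    simp only [OrthonormalBasis.coe_toBasis, ContinuousLinearMap.coe_coe, h, map_smul]
    simp only [OrthonormalBasis.coe_toBasis_repr_apply, Finsupp.smul_apply, Matrix.diagonal_apply]
    rw [OrthonormalBasis.repr_self]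
    by_cases hij : i = j
    · subst hij; simp
    · simp [hij]
  unfold ContinuousLinearMap.det
  rw [← LinearMap.det_toMatrix b.toBasis, this, Matrix.det_diagonal]

lemma null_image {n : ℕ} {f : Euc n → Euc n} (hf : LipschitzWith 1 f) {s : Set (Euc n)}
    (hs : volume s = 0) : volume (f '' s) = 0 := by
  have h1 : (volume : Measure (Euc n)) ≪ μH[n] := by
    have := isAddHaarMeasure_hausdorffMeasure (E := Euc n)
    rw [finrank_euclideanSpace_fin] at this
    exact Measure.absolutelyContinuous_isAddHaarMeasure _ _
  have h2 : (μH[n] : Measure (Euc n)) ≪ volume := by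
    have := isAddHaarMeasure_hausdorffMeasure (E := Euc n)
    rw [finrank_euclideanSpace_fin] at this
    exact Measure.absolutelyContinuous_isAddHaarMeasure _ _
  apply h1
  have h3 := (hf.lipschitzOnWith (s := s)).hausdorffMeasure_image_le (d := n) (by positivity)
  rw [h2 hs] at h3
  simpa using h3

/-- eigenvalue bound at a contact point -/
lemma det_bound {n : ℕ} (hn : 2 ≤ n) {lam Lam : ℝ} (hlam : 0 < lam) (hLam : lam ≤ Lam)
    {Ω : Set (Euc n)} {v : Euc n → ℝ} (hs : ViscSupersol lam Lam Ω v) {a : ℝ} (ha : 0 < a)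
    {Γ : Euc n → ℝ} {X : Euc n → Euc n}
    (hX : ∀ z x, Γ x ≥ Γ (X z) + ⟪z - X z, x - X z⟫_ℝ) {S : Euc n →L[ℝ] Euc n} {z₀ : Euc n}
    (hS : HasFDerivAt X S z₀) (hx : X z₀ ∈ Ω)
    (hle : ∀ x ∈ Ω, Γ x ≤ v x / a + 1/2 * ‖x‖ ^ 2)
    (heq : Γ (X z₀) = v (X z₀) / a + 1/2 * ‖X z₀‖ ^ 2) :
    |(ContinuousLinearMap.id ℝ (Euc n) - S).det| ≤ ((lam + ((n:ℝ) - 1) * Lam) / lam) ^ n * |S.det| := by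
  set C := (lam + ((n:ℝ) - 1) * Lam) / lam with hC
  have hn' : (2:ℝ) ≤ n := by exact_mod_cast hn
  have hC0 : 0 ≤ C := by
    apply div_nonneg _ hlam.le
    have : 0 ≤ ((n:ℝ) - 1) * Lam := mul_nonneg (by linarith) (by linarith)
    linarith
  have hT : HasFDerivAt (fun z => z - X z) (ContinuousLinearMap.id ℝ (Euc n) - S) z₀ :=
    (hasFDerivAt_id z₀).sub hS
  have hsym : ∀ u w, ⟪S u, w⟫_ℝ = ⟪S w, u⟫_ℝ := by
    intro u w
    have := grad_symm (prox_env_deriv hX) hT u w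
    simp only [sub_apply, ContinuousLinearMap.id_apply, inner_sub_left] at this
    rw [real_inner_comm] at this
    linarith
  have hsym' : (S : Euc n →ₗ[ℝ] Euc n).IsSymmetric := by
    intro u w
    have h1 := hsym u w
    rw [real_inner_comm u (S w)] at h1
    exact h1
  set b := hsym'.eigenvectorBasis (n := n) (by simp) with hb
  set s := hsym'.eigenvalues (n := n) (by simp) with hsdef
  have hSb : ∀ i, S (b i) = s i • b i := by
    intro i
    have := hsym'.apply_eigenvectorBasis (n := n) (by simp) i
    exact this
  have hr : ∀ i, 0 ≤ s i ∧ s i ≤ 1 := fun i => eig_range hX hS (b.orthonormal.1 i) (hSb i)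
  set m : Fin n → ℝ := fun i => (if s i = 0 then 2 * (C + 1) - 1 else (1 - s i) / s i) with hm
  have hm0 : ∀ i, 0 ≤ m i := by
    intro i
    simp only [hm]
    split_ifs with h
    · linarith
    · exact div_nonneg (by linarith [(hr i).2]) (hr i).1
  have hmC : ∀ j, m j ≤ C := by
    intro j
    apply le_of_forall_pos_le_add
    intro δ hδ
    obtain ⟨ε, hε, hεδ⟩ : ∃ ε : ℝ, 0 < ε ∧ C * (2 * ε) ≤ δ := by
      refine ⟨δ / (2 * (C + 1)), by positivity, ?_⟩
      rw [show C * (2 * (δ / (2 * (C + 1)))) = δ * (C / (C + 1)) by field_simp]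
      have : C / (C + 1) ≤ 1 := by rw [div_le_one (by linarith)]; linarith
      nlinarith
    have h2 := prox_second hX hS hsym b s hSb (C + 1) hε
    have hnorm : ∀ h : Euc n, ‖h‖ ^ 2 = ∑ i, ⟪b i, h⟫_ℝ ^ 2 := by
      intro h
      rw [← b.sum_sq_norm_inner_right h]; simp
    have h3 := visc_quad hlam hLam hs hx b (fun i => a * (m i - 1 - 2 * ε)) (κ := a * (1 + 2 * ε))
      (by positivity) (by
        intro i
        nlinarith [hm0 i]) (a • ((z₀ - X z₀) - X z₀)) (by
        filter_upwards [h2] with x hx2 hxΩ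
        have h4 := hle x hxΩ
        set h := x - X z₀ with hh
        have h5 : ‖x‖ ^ 2 = ‖X z₀‖ ^ 2 + 2 * ⟪X z₀, h⟫_ℝ + ‖h‖ ^ 2 := by
          rw [← norm_add_sq_real, hh]; congr 2; abel
        have h6 : ∑ i, a * (m i - 1 - 2 * ε) * ⟪b i, h⟫_ℝ ^ 2 =
            a * (∑ i, m i * ⟪b i, h⟫_ℝ ^ 2 - (1 + 2 * ε) * ‖h‖ ^ 2) := by
          rw [hnorm, Finset.mul_sum, ← Finset.sum_sub_distrib, Finset.mul_sum]
          apply Finset.sum_congr rfl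
          intro i _
          ring
        rw [h6, inner_smul_left, inner_sub_left]
        simp only [conj_trivial]
        have h7 : Γ x * a ≤ v x + 1/2 * ‖x‖ ^ 2 * a := by
          have := mul_le_mul_of_nonneg_right h4 ha.le
          rw [add_mul, div_mul_cancel₀ _ ha.ne'] at this
          exact this
        have h8 : Γ (X z₀) * a = v (X z₀) + 1/2 * ‖X z₀‖ ^ 2 * a := by
          rw [heq, add_mul, div_mul_cancel₀ _ ha.ne']
        have h9 := mul_le_mul_of_nonneg_right hx2 ha.le
        rw [h5] at h7
        change (Γ (X z₀) + ⟪z₀ - X z₀, h⟫_ℝ + 1/2 * ∑ i, m i * ⟪b i, h⟫_ℝ ^ 2 - ε * ‖h‖ ^ 2) * a ≤ _ at h9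
        nlinarith) j
    have h4 : lam * (m j - 1 - 2 * ε) ≤ ((n:ℝ) - 1) * Lam * (1 + 2 * ε) := by
      have : a * (lam * (m j - 1 - 2 * ε)) ≤ a * (((n:ℝ) - 1) * Lam * (1 + 2 * ε)) := by linarith
      exact le_of_mul_le_mul_left this ha
    have h5 : lam * m j ≤ lam * (C * (1 + 2 * ε)) := by
      have : lam * C = lam + ((n:ℝ) - 1) * Lam := by rw [hC]; field_simp
      rw [← mul_assoc, this]
      nlinarith
    have h6 := le_of_mul_le_mul_left h5 hlam
    linarith
  have hfin : ∀ i, 1 - s i ≤ C * s i := by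
    intro i
    have h1 := hmC i
    simp only [hm] at h1
    split_ifs at h1 with h
    · linarith
    · have : 0 < s i := lt_of_le_of_ne (hr i).1 (Ne.symm h)
      rwa [div_le_iff₀ this] at h1
  rw [det_of_eig b S s hSb, det_of_eig b (ContinuousLinearMap.id ℝ (Euc n) - S) (fun i => 1 - s i) (by
    intro i
    simp [hSb, sub_smul])]
  rw [abs_of_nonneg (Finset.prod_nonneg (fun i _ => by linarith [(hr i).2])),
    abs_of_nonneg (Finset.prod_nonneg (fun i _ => (hr i).1))]
  calc ∏ i, (1 - s i) ≤ ∏ i, (C * s i) := Finset.prod_le_prod (fun i _ => by linarith [(hr i).2]) (fun i _ => hfin i)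
    _ = _ := by rw [Finset.prod_mul_distrib]; simp

/-- uniqueness of slopes -/
lemma slope_unique {n : ℕ} {lam Lam : ℝ} (hlam : 0 < lam) (hLam : lam ≤ Lam)
    {Ω : Set (Euc n)} {v : Euc n → ℝ} (hs : ViscSupersol lam Lam Ω v) {a : ℝ} (ha : 0 < a)
    {x : Euc n} (hx : x ∈ Ω) {p q : Euc n}
    (hp : ∀ x' ∈ Ω, v x' ≥ v x + ⟪p, x' - x⟫_ℝ - a / 2 * ‖x' - x‖ ^ 2)
    (hq : ∀ x' ∈ Ω, v x' ≥ v x + ⟪q, x' - x⟫_ℝ - a / 2 * ‖x' - x‖ ^ 2) : p = q := by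
  by_contra hpq
  set d := ‖p - q‖ with hd
  have hd0 : 0 < d := norm_pos_iff.2 (sub_ne_zero.2 hpq)
  set e := d⁻¹ • (p - q) with he
  have he1 : ‖e‖ = 1 := by
    rw [he, norm_smul, norm_inv, Real.norm_of_nonneg hd0.le]
    exact inv_mul_cancel₀ hd0.ne'
  obtain ⟨N, hN, hN2⟩ : ∃ N : ℝ, 0 < N ∧ ((n:ℝ) - 1) * Lam * a < lam * (N - a) := by
    refine ⟨max 1 ((((n:ℝ) - 1) * Lam * a) / lam + a + 1), lt_of_lt_of_le one_pos (le_max_left _ _), ?_⟩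
    have := le_max_right 1 ((((n:ℝ) - 1) * Lam * a) / lam + a + 1)
    have h2 : (((n:ℝ) - 1) * Lam * a) / lam + 1 ≤ max 1 ((((n:ℝ) - 1) * Lam * a) / lam + a + 1) - a := by linarith
    have h3 := mul_le_mul_of_nonneg_left h2 hlam.le
    rw [mul_add, mul_div_cancel₀ _ hlam.ne'] at h3
    linarith
  have := visc_dir hlam hLam hs hx he1 hN.le ha.le ((1/2 : ℝ) • (p + q)) (by
    have hball : ball x (d / N) ∈ nhds x := ball_mem_nhds _ (by positivity)
    filter_upwards [hball] with x' hx' hxΩ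
    have h1 := hp x' hxΩ
    have h2 := hq x' hxΩ
    rw [mem_ball, dist_eq_norm] at hx'
    set h := x' - x with hh
    have h3 : ⟪p, h⟫_ℝ - ⟪q, h⟫_ℝ = d * ⟪e, h⟫_ℝ := by
      rw [← inner_sub_left, he, inner_smul_left]
      simp only [conj_trivial]
      rw [mul_inv_cancel_left₀ hd0.ne']
    have h4 : |⟪e, h⟫_ℝ| ≤ ‖h‖ := by
      have := abs_real_inner_le_norm e h
      rwa [he1, one_mul] at this
    have h5 : N * |⟪e, h⟫_ℝ| ≤ d := by
      rw [lt_div_iff₀ hN] at hx'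
      nlinarith
    have h6 : N * ⟪e, h⟫_ℝ ^ 2 ≤ d * |⟪e, h⟫_ℝ| := by
      rw [← sq_abs]
      nlinarith [abs_nonneg ⟪e, h⟫_ℝ]
    rw [inner_smul_left, inner_add_left]
    simp only [conj_trivial]
    rcases abs_cases ⟪e, h⟫_ℝ with ⟨h7, _⟩ | ⟨h7, _⟩
    · rw [h7] at h6; nlinarith
    · rw [h7] at h6; nlinarith)
  linarith

/-- measure estimate by sliding paraboloids -/
lemma sliding {n : ℕ} (hn : 2 ≤ n) {lam Lam : ℝ} (hlam : 0 < lam) (hLam : lam ≤ Lam)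
    {Ω : Set (Euc n)} {v : Euc n → ℝ} (hv : ContinuousOn v Ω)
    (hs : ViscSupersol lam Lam Ω v) {a : ℝ} (ha : 0 < a)
    {B F : Set (Euc n)} (hB : IsCompact B) (hF : IsCompact F) (hFΩ : F ⊆ Ω)
    (h : ∀ y ∈ B, ∃ x ∈ F, ∀ x' ∈ Ω, v x + a / 2 * ‖x - y‖ ^ 2 ≤ v x' + a / 2 * ‖x' - y‖ ^ 2) :
    volume B ≤ ENNReal.ofReal (((lam + ((n:ℝ) - 1) * Lam) / lam) ^ n) * volume (Gm a v Ω ∩ F) := by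
  rcases B.eq_empty_or_nonempty with hBe | hBne
  · rw [hBe]; simp
  set C := (lam + ((n:ℝ) - 1) * Lam) / lam with hC
  set ψ : Euc n → ℝ := fun x => v x / a + 1/2 * ‖x‖ ^ 2 with hψ
  have hψc : ContinuousOn ψ Ω := by
    apply ContinuousOn.add (hv.div_const a)
    fun_prop
  set P : Set (Euc n × Euc n) := (F ×ˢ B) ∩ ⋂ x' ∈ Ω, ((F ×ˢ B) ∩
    (fun q : Euc n × Euc n => ψ q.1 + ⟪q.2, x' - q.1⟫_ℝ) ⁻¹' Set.Iic (ψ x')) with hP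
  have hψ1 : ContinuousOn (fun q : Euc n × Euc n => ψ q.1) (F ×ˢ B) :=
    hψc.comp continuousOn_fst (fun q hq => hFΩ hq.1)
  have hgc : ∀ x', ContinuousOn (fun q : Euc n × Euc n => ψ q.1 + ⟪q.2, x' - q.1⟫_ℝ) (F ×ˢ B) := by
    intro x'
    apply hψ1.add
    apply Continuous.continuousOn
    fun_prop
  have hFB : IsCompact (F ×ˢ B) := hF.prod hB
  have hPc : IsCompact P := by
    apply hFB.inter_right
    apply isClosed_biInter
    intro x' _
    exact (hgc x').preimage_isClosed_of_isClosed hFB.isClosed isClosed_Iic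
  have hPm : ∀ x y, x ∈ F → y ∈ B → ((x, y) ∈ P ↔ ∀ x' ∈ Ω, ψ x + ⟪y, x' - x⟫_ℝ ≤ ψ x') := by
    intro x y hx hy
    simp only [hP, Set.mem_inter_iff, Set.mem_prod, Set.mem_iInter, Set.mem_preimage, Set.mem_Iic]
    constructor
    · intro hh x' hx'
      exact (hh.2 x' hx').2
    · intro hh
      exact ⟨⟨hx, hy⟩, fun x' hx' => ⟨⟨hx, hy⟩, hh x' hx'⟩⟩
  have hPs : ∀ q ∈ P, q.1 ∈ F ∧ q.2 ∈ B ∧ ∀ x' ∈ Ω, ψ q.1 + ⟪q.2, x' - q.1⟫_ℝ ≤ ψ x' := by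
    intro q hq
    exact ⟨hq.1.1, hq.1.2, (hPm q.1 q.2 hq.1.1 hq.1.2).1 hq⟩
  have hPB : ∀ y ∈ B, ∃ x, (x, y) ∈ P := by
    intro y hy
    obtain ⟨x, hx, hmin⟩ := h y hy
    refine ⟨x, (hPm x y hx hy).2 ?_⟩
    intro x' hx'
    have h1 := hmin x' hx'
    have h2 : v x / a + 1/2 * ‖x - y‖ ^ 2 ≤ v x' / a + 1/2 * ‖x' - y‖ ^ 2 := by
      have e1 : ∀ t s : ℝ, t / a + 1/2 * s = (t + a / 2 * s) / a := by
        intro t s; field_simp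
      rw [e1, e1]
      exact div_le_div_of_nonneg_right h1 ha.le
    simp only [hψ]
    rw [norm_sub_sq_real, norm_sub_sq_real] at h2
    rw [inner_sub_right, real_inner_comm x' y, real_inner_comm x y]
    linarith
  have hPne : P.Nonempty := by
    obtain ⟨y, hy⟩ := hBne
    obtain ⟨x, hx⟩ := hPB y hy
    exact ⟨_, hx⟩
  set Γ : Euc n → ℝ := fun x => sSup ((fun q : Euc n × Euc n => ψ q.1 + ⟪q.2, x - q.1⟫_ℝ) '' P) with hΓ
  have hbdd : ∀ x, BddAbove ((fun q : Euc n × Euc n => ψ q.1 + ⟪q.2, x - q.1⟫_ℝ) '' P) := fun x =>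
    hPc.bddAbove_image ((hgc x).mono Set.inter_subset_left)
  have hΓa : ∀ x, ∀ q ∈ P, ψ q.1 + ⟪q.2, x - q.1⟫_ℝ ≤ Γ x := fun x q hq =>
    le_csSup (hbdd x) (Set.mem_image_of_mem _ hq)
  have hΓb : ∀ x M, (∀ q ∈ P, ψ q.1 + ⟪q.2, x - q.1⟫_ℝ ≤ M) → Γ x ≤ M := by
    intro x M hM
    apply csSup_le (hPne.image _)
    rintro _ ⟨q, hq, rfl⟩
    exact hM q hq
  have hconv : ConvexOn ℝ Set.univ Γ := by
    refine ⟨convex_univ, ?_⟩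
    intro x _ y _ s t hs0 ht0 hst
    apply hΓb
    intro q hq
    have h1 := mul_le_mul_of_nonneg_left (hΓa x q hq) hs0
    have h2 := mul_le_mul_of_nonneg_left (hΓa y q hq) ht0
    have h3 : ⟪q.2, s • x + t • y - q.1⟫_ℝ = s * ⟪q.2, x - q.1⟫_ℝ + t * ⟪q.2, y - q.1⟫_ℝ := by
      rw [← inner_smul_right, ← inner_smul_right, ← inner_add_right]
      congr 1
      have : q.1 = s • q.1 + t • q.1 := by rw [← add_smul, hst, one_smul]
      nth_rewrite 1 [this]
      rw [smul_sub, smul_sub]; abel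
    simp only [smul_eq_mul]
    rw [h3]
    have : ψ q.1 = s * ψ q.1 + t * ψ q.1 := by rw [← add_mul, hst, one_mul]
    nlinarith
  obtain ⟨R, hR⟩ := hB.isBounded.exists_norm_le
  have hR0 : 0 ≤ R := by
    obtain ⟨y, hy⟩ := hBne
    exact (norm_nonneg y).trans (hR y hy)
  have hlip : ∀ x x', Γ x ≤ Γ x' + R * ‖x - x'‖ := by
    intro x x'
    apply hΓb
    intro q hq
    have h1 := hΓa x' q hq
    have h2 : ⟪q.2, x - q.1⟫_ℝ = ⟪q.2, x' - q.1⟫_ℝ + ⟪q.2, x - x'⟫_ℝ := by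
      rw [← inner_add_right]; congr 1; abel
    have h3 := real_inner_le_norm q.2 (x - x')
    have h4 := hR q.2 (hPs q hq).2.1
    have h5 := mul_le_mul_of_nonneg_right h4 (norm_nonneg (x - x'))
    linarith
  have hΓc : Continuous Γ := by
    apply LipschitzWith.continuous (K := ⟨R, hR0⟩)
    apply LipschitzWith.of_le_add_mul
    intro x y
    rw [dist_eq_norm]
    exact hlip x y
  have hex := prox_exists hconv hΓc R (by
    intro x
    have := hlip 0 x
    rw [zero_sub, norm_neg] at this
    linarith)
  choose X hX using hex
  have hΓle : ∀ x ∈ Ω, Γ x ≤ ψ x := by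
    intro x hx
    apply hΓb
    intro q hq
    exact (hPs q hq).2.2 x hx
  have hΓeq : ∀ q ∈ P, Γ q.1 = ψ q.1 := by
    intro q hq
    apply le_antisymm (hΓle _ (hFΩ (hPs q hq).1))
    have := hΓa q.1 q hq
    simpa using this
  have hXP : ∀ q ∈ P, X (q.1 + q.2) = q.1 := by
    intro q hq
    set z := q.1 + q.2 with hz
    have h1 := hX z q.1
    have h2 := hΓa (X z) q hq
    rw [← hΓeq q hq] at h2
    have h3 : ⟪z - X z, q.1 - X z⟫_ℝ = ‖q.1 - X z‖ ^ 2 - ⟪q.2, X z - q.1⟫_ℝ := by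
      rw [← real_inner_self_eq_norm_sq, ← neg_sub q.1 (X z), inner_neg_right, sub_neg_eq_add,
        ← inner_add_left]
      congr 1
      rw [hz]; abel
    rw [h3] at h1
    have h4 : ‖q.1 - X z‖ ^ 2 ≤ 0 := by linarith
    have h5 : ‖q.1 - X z‖ = 0 := by
      have := norm_nonneg (q.1 - X z)
      nlinarith
    exact (sub_eq_zero.1 (norm_eq_zero.1 h5)).symm
  have hPG : ∀ q ∈ P, ∀ x' ∈ Ω, v x' ≥ v q.1 + ⟪a • (q.2 - q.1), x' - q.1⟫_ℝ - a / 2 * ‖x' - q.1‖ ^ 2 := by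
    intro q hq x' hx'
    have h1 := (hPs q hq).2.2 x' hx'
    simp only [hψ] at h1
    have h2 : ‖x'‖ ^ 2 = ‖q.1‖ ^ 2 + 2 * ⟪q.1, x' - q.1⟫_ℝ + ‖x' - q.1‖ ^ 2 := by
      rw [← norm_add_sq_real]; congr 2; abel
    rw [h2] at h1
    have h3 := mul_le_mul_of_nonneg_left h1 ha.le
    rw [inner_smul_left, inner_sub_left]
    simp only [conj_trivial]
    have e1 : ∀ t : ℝ, a * (t / a) = t := fun t => mul_div_cancel₀ _ ha.ne'
    simp only [mul_add, e1] at h3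
    nlinarith
  set Z : Set (Euc n) := (fun q : Euc n × Euc n => q.1 + q.2) '' P with hZ
  have hZc : IsCompact Z := hPc.image (by fun_prop)
  have hinj : Set.InjOn X Z := by
    rintro _ ⟨q, hq, rfl⟩ _ ⟨q', hq', rfl⟩ heq
    simp only [hXP q hq, hXP q' hq'] at heq
    have h1 := hPG q hq
    have h2 := hPG q' hq'
    rw [← heq] at h2
    have h3 := slope_unique hlam hLam hs ha (hFΩ (hPs q hq).1) h1 h2
    have h4 := smul_right_injective (Euc n) ha.ne' h3
    have h5 : q.2 = q'.2 := sub_left_injective h4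
    simp only [heq, h5]
  have hXl : LipschitzWith 1 X := LipschitzWith.of_dist_le_mul (fun z z' => by
    rw [dist_eq_norm, dist_eq_norm]; simpa using prox_lip hX z z')
  have hYl : LipschitzWith 1 (fun z => z - X z) := LipschitzWith.of_dist_le_mul (fun z z' => by
    rw [dist_eq_norm, dist_eq_norm]; simpa using prox_lip' hX z z')
  set Df : Set (Euc n) := {z | DifferentiableAt ℝ X z} with hDf
  have hDm : MeasurableSet Df := measurableSet_of_differentiableAt ℝ X
  have hnull : volume (Z \ Df) = 0 := by
    have := hXl.ae_differentiableAt (μ := volume)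
    rw [ae_iff] at this
    exact measure_mono_null (fun z hz => hz.2) this
  have hZm : MeasurableSet (Z ∩ Df) := hZc.measurableSet.inter hDm
  have hsub : B ⊆ (fun z => z - X z) '' (Z ∩ Df) ∪ (fun z => z - X z) '' (Z \ Df) := by
    rw [← Set.image_union, Set.inter_union_sdiff]
    intro y hy
    obtain ⟨x, hx⟩ := hPB y hy
    refine ⟨x + y, ⟨_, hx, rfl⟩, ?_⟩
    have := hXP _ hx
    simp only at this
    simp only [this]
    abel
  have hC0 : 0 ≤ C ^ n := by
    apply pow_nonneg
    apply div_nonneg _ hlam.le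
    have hn' : (2:ℝ) ≤ n := by exact_mod_cast hn
    have : 0 ≤ ((n:ℝ) - 1) * Lam := mul_nonneg (by linarith) (by linarith)
    linarith
  calc volume B ≤ volume ((fun z => z - X z) '' (Z ∩ Df)) + volume ((fun z => z - X z) '' (Z \ Df)) :=
        (measure_mono hsub).trans (measure_union_le _ _)
    _ = volume ((fun z => z - X z) '' (Z ∩ Df)) := by rw [null_image hYl hnull, add_zero]
    _ ≤ ∫⁻ z in Z ∩ Df, ENNReal.ofReal |(ContinuousLinearMap.id ℝ (Euc n) - fderiv ℝ X z).det| := by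
        apply addHaar_image_le_lintegral_abs_det_fderiv volume hZm
        intro z hz
        exact ((hasFDerivAt_id z).sub (DifferentiableAt.hasFDerivAt hz.2)).hasFDerivWithinAt
    _ ≤ ∫⁻ z in Z ∩ Df, ENNReal.ofReal (C ^ n) * ENNReal.ofReal |(fderiv ℝ X z).det| := by
        apply setLIntegral_mono' hZm
        rintro z ⟨⟨q, hq, rfl⟩, hz⟩
        rw [← ENNReal.ofReal_mul hC0]
        apply ENNReal.ofReal_le_ofReal
        apply det_bound hn hlam hLam hs ha hX (DifferentiableAt.hasFDerivAt hz)
        · simp only [hXP q hq]; exact hFΩ (hPs q hq).1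
        · exact hΓle
        · simp only [hXP q hq]; exact hΓeq q hq
    _ = ENNReal.ofReal (C ^ n) * ∫⁻ z in Z ∩ Df, ENNReal.ofReal |(fderiv ℝ X z).det| :=
        lintegral_const_mul' _ _ ENNReal.ofReal_ne_top
    _ = ENNReal.ofReal (C ^ n) * volume (X '' (Z ∩ Df)) := by
        rw [lintegral_abs_det_fderiv_eq_addHaar_image volume hZm
          (fun z hz => (DifferentiableAt.hasFDerivAt hz.2).hasFDerivWithinAt) (hinj.mono Set.inter_subset_left)]
    _ ≤ _ := by
        gcongr
        rintro _ ⟨z, ⟨⟨q, hq, rfl⟩, hz⟩, rfl⟩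
        simp only [hXP q hq]
        exact ⟨⟨hFΩ (hPs q hq).1, _, hPG q hq⟩, (hPs q hq).1⟩

lemma rpow_taylor {β s₀ ε : ℝ} (hs : 0 < s₀) (hε : 0 < ε) :
    ∀ᶠ s in nhds s₀, s ^ (-β) ≥ s₀ ^ (-β) - β * s₀ ^ (-β - 1) * (s - s₀)
      + 1/2 * (β * (β + 1) * s₀ ^ (-β - 2)) * (s - s₀) ^ 2 - ε * (s - s₀) ^ 2 := by
  have h1 : ∀ᶠ z in nhds s₀, HasFDerivAt (fun z : ℝ => z ^ (-β))
      (innerSL ℝ (-β * z ^ (-β - 1))) z := by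
    filter_upwards [lt_mem_nhds hs] with z hz
    have := (Real.hasDerivAt_rpow_const (x := z) (p := -β) (Or.inl hz.ne')).hasFDerivAt
    refine HasFDerivAt.congr_fderiv this ?_
    ext
    simp
  have h2 : HasFDerivAt (fun z : ℝ => -β * z ^ (-β - 1))
      ((β * (β + 1) * s₀ ^ (-β - 2)) • ContinuousLinearMap.id ℝ ℝ) s₀ := by
    have := ((Real.hasDerivAt_rpow_const (x := s₀) (p := -β - 1) (Or.inl hs.ne')).const_mul (-β)).hasFDerivAt
    refine HasFDerivAt.congr_fderiv this ?_
    ext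
    have e : -β - 1 - 1 = -β - 2 := by ring
    simp only [e]
    simp
    ring
  have h3 := taylor2 h1 h2 (by intro v w; simp; ring) hε
  filter_upwards [h3] with s h
  have h4 := (abs_le.1 h).1
  simp at h4
  nlinarith [h4]

lemma barrier_alg {E : Type*} [NormedAddCommGroup E] [InnerProductSpace ℝ E]
    {ξ h : E} {B1 B2 ε δ fs f0 : ℝ} (hB2 : 0 ≤ B2) (hε : 0 ≤ ε) (h1 : ‖h‖ ≤ 1)
    (h2 : 2 * B2 * ‖ξ‖ * ‖h‖ ≤ δ / 4) (h3 : ε * (2 * ‖ξ‖ + 1) ^ 2 ≤ δ / 4)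
    (hf : fs ≥ f0 - B1 * (2 * ⟪ξ, h⟫_ℝ + ‖h‖ ^ 2) + 1/2 * B2 * (2 * ⟪ξ, h⟫_ℝ + ‖h‖ ^ 2) ^ 2
      - ε * (2 * ⟪ξ, h⟫_ℝ + ‖h‖ ^ 2) ^ 2) :
    fs ≥ f0 - 2 * B1 * ⟪ξ, h⟫_ℝ + 1/2 * (4 * B2 * ⟪ξ, h⟫_ℝ ^ 2 - (2 * B1 + δ) * ‖h‖ ^ 2) := by
  have hc := abs_le.1 (abs_real_inner_le_norm ξ h)
  set I := ⟪ξ, h⟫_ℝ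
  have hh := norm_nonneg h
  have hx := norm_nonneg ξ
  set H := ‖h‖
  set X := ‖ξ‖
  have k1 : (2 * I + H ^ 2) ^ 2 ≥ 4 * I ^ 2 - 4 * X * H * H ^ 2 := by
    have : I * H ^ 2 ≥ -(X * H) * H ^ 2 := mul_le_mul_of_nonneg_right hc.1 (sq_nonneg H)
    nlinarith [sq_nonneg (H ^ 2)]
  have k2 : (2 * I + H ^ 2) ^ 2 ≤ (2 * X + 1) ^ 2 * H ^ 2 := by
    rw [← mul_pow]
    apply sq_le_sq'
    · nlinarith
    · nlinarith
  have k3 := mul_le_mul_of_nonneg_left k1 hB2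
  have k4 := mul_le_mul_of_nonneg_left k2 hε
  have k5 := mul_le_mul_of_nonneg_right h2 (sq_nonneg H)
  have k6 := mul_le_mul_of_nonneg_right h3 (sq_nonneg H)
  nlinarith

/-- no interior contact for the barrier -/
lemma barrier_contact {n : ℕ} {lam Lam : ℝ} (hlam : 0 < lam) (hLam : lam ≤ Lam)
    {Ω : Set (Euc n)} {v : Euc n → ℝ} (hs : ViscSupersol lam Lam Ω v)
    {α : ℝ} (hα : 2 ≤ α) (hα2 : ((n:ℝ) - 1) * Lam ≤ lam * α) {R K : ℝ} (hR : 0 < R) (hK : 0 < K)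
    {c xs x1 p : Euc n} (hxs : xs ∈ Ω) (hne : 0 < ‖xs - c‖) (hle : ‖xs - c‖ ≤ R)
    (hmin : ∀ᶠ x in nhds xs, 
      v xs - ⟪p, xs - x1⟫_ℝ + K / 2 * ‖xs - x1‖ ^ 2 
        - (3 * K * R ^ (α + 2)) * (‖xs - c‖ ^ 2) ^ (-(α/2)) ≤
      v x - ⟪p, x - x1⟫_ℝ + K / 2 * ‖x - x1‖ ^ 2 
        - (3 * K * R ^ (α + 2)) * (‖x - c‖ ^ 2) ^ (-(α/2))) : False := by
  set A := 3 * K * R ^ (α + 2) with hA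
  have hApos : 0 < A := by positivity
  set ξ := xs - c with hξ
  set β := α / 2 with hβ
  set s₀ := ‖ξ‖ ^ 2 with hs0
  have hs0p : 0 < s₀ := by positivity
  set B1 := β * s₀ ^ (-β - 1) with hB1
  set B2 := β * (β + 1) * s₀ ^ (-β - 2) with hB2
  have hβ0 : 0 < β := by rw [hβ]; linarith
  have hB1p : 0 < B1 := by positivity
  have hB2p : 0 < B2 := by positivity
  set δ := K / (2 * A) with hδ
  have hδp : 0 < δ := by positivity
  set ε := δ / 4 / (2 * ‖ξ‖ + 1) ^ 2 with hε
  have hεp : 0 < ε := by positivity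
  have hT := rpow_taylor (β := β) hs0p hεp
  have hcont : Filter.Tendsto (fun x : Euc n => ‖x - c‖ ^ 2) (nhds xs) (nhds s₀) := by
    have : Continuous (fun x : Euc n => ‖x - c‖ ^ 2) := by fun_prop
    exact this.tendsto xs
  have hT' := hcont.eventually hT
  have hsm : ∀ᶠ x in nhds xs, ‖x - xs‖ < min 1 (δ / 4 / (2 * B2 * ‖ξ‖)) := by
    have : 0 < min 1 (δ / 4 / (2 * B2 * ‖ξ‖)) := by positivity
    filter_upwards [Metric.ball_mem_nhds xs this] with x hx
    rwa [← dist_eq_norm]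
  have hlow : ∀ᶠ x in nhds xs, x ∈ Ω → v x ≥ v xs +
      ⟪p - K • (xs - x1) - (2 * A * B1) • ξ, x - xs⟫_ℝ
      + 1/2 * ((4 * A * B2 * s₀) * ⟪(‖ξ‖⁻¹) • ξ, x - xs⟫_ℝ ^ 2
        - (2 * A * B1 + K + A * δ) * ‖x - xs‖ ^ 2) := by
    filter_upwards [hT', hsm, hmin] with x hx1 hx2 hx3 _
    have g1 : ‖x - xs‖ ≤ 1 := (hx2.trans_le (min_le_left _ _)).le
    have g2 : 2 * B2 * ‖ξ‖ * ‖x - xs‖ ≤ δ / 4 := by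
      have := (hx2.trans_le (min_le_right _ _)).le
      rw [le_div_iff₀ (by positivity)] at this
      linarith
    have g3 : ε * (2 * ‖ξ‖ + 1) ^ 2 ≤ δ / 4 := by
      rw [hε, div_mul_cancel₀ _ (by positivity)]
    have ed : ‖x - c‖ ^ 2 - s₀ = 2 * ⟪ξ, x - xs⟫_ℝ + ‖x - xs‖ ^ 2 := by
      have : x - c = ξ + (x - xs) := by rw [hξ]; abel
      rw [this, norm_add_sq_real, hs0]; ring
    rw [ed] at hx1
    have g4 := mul_le_mul_of_nonneg_left (barrier_alg hB2p.le hεp.le g1 g2 g3 hx1) hApos.le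
    have e1 : ‖x - x1‖ ^ 2 = ‖xs - x1‖ ^ 2 + 2 * ⟪xs - x1, x - xs⟫_ℝ + ‖x - xs‖ ^ 2 := by
      have : x - x1 = (xs - x1) + (x - xs) := by abel
      rw [this, norm_add_sq_real]
    have e2 : ⟪p, x - x1⟫_ℝ = ⟪p, xs - x1⟫_ℝ + ⟪p, x - xs⟫_ℝ := by
      rw [← inner_add_right]; congr 1; abel
    have e3 : ⟪p - K • (xs - x1) - (2 * A * B1) • ξ, x - xs⟫_ℝ =
        ⟪p, x - xs⟫_ℝ - K * ⟪xs - x1, x - xs⟫_ℝ - 2 * A * B1 * ⟪ξ, x - xs⟫_ℝ := by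
      rw [inner_sub_left, inner_sub_left, real_inner_smul_left, real_inner_smul_left]
    have e4 : s₀ * ⟪(‖ξ‖⁻¹) • ξ, x - xs⟫_ℝ ^ 2 = ⟪ξ, x - xs⟫_ℝ ^ 2 := by
      rw [real_inner_smul_left, hs0]; field_simp
    rw [e1, e2] at hx3
    rw [e3, mul_assoc (4 * A * B2), e4]
    linear_combination g4 + hx3
  have hfin := visc_dir hlam hLam hs hxs (e := (‖ξ‖⁻¹) • ξ) (by
    rw [norm_smul, norm_inv, norm_norm, inv_mul_cancel₀ hne.ne'])
    (N := 4 * A * B2 * s₀) (by positivity) (κ := 2 * A * B1 + K + A * δ) (by positivity) _ hlow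
  have eδ : A * δ = K / 2 := by rw [hδ]; field_simp
  set g := 2 * A * B1 with hg
  have eN : 4 * A * B2 * s₀ = g * (α + 2) := by
    have : s₀ ^ (-β - 2) * s₀ = s₀ ^ (-β - 1) := by
      rw [← Real.rpow_add_one hs0p.ne']; congr 1; ring
    calc 4 * A * B2 * s₀ = 4 * A * (β * (β + 1)) * (s₀ ^ (-β - 2) * s₀) := by rw [hB2]; ring
      _ = _ := by rw [this, hg, hB1, hβ]; ring
  have hgl : 3 * K * α ≤ g := by
    have h1 : (R ^ 2) ^ (-β - 1) ≤ s₀ ^ (-β - 1) := by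
      apply Real.rpow_le_rpow_of_nonpos hs0p
      · rw [hs0]; exact pow_le_pow_left₀ (norm_nonneg _) hle 2
      · linarith
    have h2 : R ^ (α + 2) * (R ^ 2) ^ (-β - 1) = 1 := by
      rw [← Real.rpow_natCast R 2, ← Real.rpow_mul hR.le, ← Real.rpow_add hR]
      have : α + 2 + ((2:ℕ):ℝ) * (-β - 1) = 0 := by rw [hβ]; push_cast; ring
      rw [this, Real.rpow_zero]
    calc 3 * K * α = 3 * K * α * (R ^ (α + 2) * (R ^ 2) ^ (-β - 1)) := by rw [h2, mul_one]
      _ ≤ 3 * K * α * (R ^ (α + 2) * s₀ ^ (-β - 1)) := by gcongr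
      _ = g := by rw [hg, hB1, hA, hβ]; ring
  rw [eN, eδ] at hfin
  have hgp : 0 < g := by positivity
  have h5 : ((n:ℝ) - 1) * Lam * (g + K + K / 2) ≤ lam * α * (g + K + K / 2) := by
    gcongr
  have h6 : lam * (g * (α + 2) - (g + K + K / 2)) ≤ lam * (α * (g + K + K / 2)) := by linarith
  have h7 := le_of_mul_le_mul_left h6 hlam
  nlinarith

lemma barrier {n : ℕ} {lam Lam : ℝ} (hlam : 0 < lam) (hLam : lam ≤ Lam)
    {Ω : Set (Euc n)} {v : Euc n → ℝ} (hv : ContinuousOn v Ω) (hs : ViscSupersol lam Lam Ω v)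
    {α : ℝ} (hα : 2 ≤ α) (hα2 : ((n:ℝ) - 1) * Lam ≤ lam * α) {R ρ K : ℝ} (hρ : 0 < ρ) (hρR : ρ < R)
    (hK : 0 < K) {c x1 p : Euc n} (hc : closedBall c R ⊆ Ω) (hx1 : ‖x1 - c‖ < R)
    (hp : ∀ x ∈ Ω, v x ≥ v x1 + ⟪p, x - x1⟫_ℝ - K / 2 * ‖x - x1‖ ^ 2) :
    ∃ y, ‖y - c‖ ≤ ρ ∧ v y - v x1 - ⟪p, y - x1⟫_ℝ ≤ 3 * K * R ^ 2 * (R / ρ) ^ α := by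
  have hR : 0 < R := hρ.trans hρR
  by_cases hcase : ‖x1 - c‖ ≤ ρ
  · refine ⟨x1, hcase, ?_⟩
    simp
    positivity
  push Not at hcase
  set A := 3 * K * R ^ (α + 2) with hA
  have hApos : 0 < A := by positivity
  set w : Euc n → ℝ := fun x => v x - ⟪p, x - x1⟫_ℝ + K / 2 * ‖x - x1‖ ^ 2 
        - A * (‖x - c‖ ^ 2) ^ (-(α/2)) with hw
  set S : Set (Euc n) := {x | ρ ≤ ‖x - c‖ ∧ ‖x - c‖ ≤ R} with hS
  have hSc : IsCompact S := by
    apply (isCompact_closedBall c R).of_isClosed_subset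
    · apply IsClosed.inter
      · exact isClosed_le (f := fun _ : Euc n => ρ) (g := fun x : Euc n => ‖x - c‖) continuous_const (by fun_prop)
      · exact isClosed_le (g := fun _ : Euc n => R) (f := fun x : Euc n => ‖x - c‖) (by fun_prop) continuous_const
    · intro x hx
      rw [mem_closedBall, dist_eq_norm]; exact hx.2
  have hSΩ : S ⊆ Ω := fun x hx => hc (by rw [mem_closedBall, dist_eq_norm]; exact hx.2)
  have hwc : ContinuousOn w S := by
    apply ContinuousOn.sub
    · apply ContinuousOn.add
      · apply (hv.mono hSΩ).sub
        fun_prop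
      · fun_prop
    · apply ContinuousOn.mul continuousOn_const
      apply ContinuousOn.rpow_const
      · fun_prop
      · intro x hx
        left
        have : 0 < ‖x - c‖ := hρ.trans_le hx.1
        positivity
  have hx1S : x1 ∈ S := ⟨hcase.le, hx1.le⟩
  obtain ⟨xs, hxsS, hxsm⟩ := hSc.exists_isMinOn ⟨x1, hx1S⟩ hwc
  have hval := hxsm hx1S
  simp only [Set.mem_ofPred_eq, hw] at hval
  simp only [sub_self, inner_zero_right, norm_zero] at hval
  have hu := hp xs (hSΩ hxsS)
  have hx1pos : 0 < ‖x1 - c‖ := hρ.trans hcase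
  have hxspos : 0 < ‖xs - c‖ := hρ.trans_le hxsS.1
  have hx1v : 0 < (‖x1 - c‖ ^ 2) ^ (-(α/2)) := by positivity
  -- not on outer sphere
  have hout : ‖xs - c‖ < R := by
    rcases lt_or_eq_of_le hxsS.2 with h | h
    · exact h
    exfalso
    rw [h] at hval
    have h1 : (R ^ 2) ^ (-(α/2)) < (‖x1 - c‖ ^ 2) ^ (-(α/2)) := by
      apply Real.rpow_lt_rpow_of_neg (by positivity)
      · exact pow_lt_pow_left₀ hx1 (norm_nonneg _) (by norm_num)
      · linarith
    nlinarith [mul_lt_mul_of_pos_left h1 hApos]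
  rcases lt_or_eq_of_le hxsS.1 with hin | hin
  · exfalso
    apply barrier_contact hlam hLam hs hα hα2 hR hK (hSΩ hxsS) hxspos hxsS.2 (p := p) (x1 := x1)
    have ho : IsOpen {x : Euc n | ρ < ‖x - c‖ ∧ ‖x - c‖ < R} := by
      apply IsOpen.inter
      · exact isOpen_lt (f := fun _ : Euc n => ρ) (g := fun x : Euc n => ‖x - c‖) continuous_const (by fun_prop)
      · exact isOpen_lt (g := fun _ : Euc n => R) (f := fun x : Euc n => ‖x - c‖) (by fun_prop) continuous_const
    filter_upwards [ho.mem_nhds ⟨hin, hout⟩] with x hx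
    exact hxsm (show x ∈ S from ⟨hx.1.le, hx.2.le⟩)
  · refine ⟨xs, hin.symm.le, ?_⟩
    rw [← hin] at hval
    have e1 : A * (ρ ^ 2) ^ (-(α/2)) = 3 * K * R ^ 2 * (R / ρ) ^ α := by
      rw [← Real.rpow_natCast ρ 2, ← Real.rpow_mul hρ.le, Real.div_rpow hR.le hρ.le, hA,
        Real.rpow_add hR]
      have : ((2:ℕ):ℝ) * (-(α/2)) = -α := by push_cast; ring
      rw [this, Real.rpow_neg hρ.le]
      norm_num
      ring
    rw [e1] at hval
    nlinarith [mul_pos hApos hx1v, sq_nonneg ‖xs - x1‖, mul_nonneg hK.le (sq_nonneg ‖xs - x1‖)]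

lemma vol_box {n : ℕ} (c : Euc n) {s : ℝ} (hs : 0 ≤ s) (I : ℝ → Set ℝ)
    (hI : ∀ i, volume (I (c i)) = ENNReal.ofReal s) (hm : ∀ i, MeasurableSet (I (c i))) :
    volume {y : Euc n | ∀ i, y i ∈ I (c i)} = ENNReal.ofReal (s ^ n) := by
  have h := (PiLp.volume_preserving_ofLp (Fin n)).measure_preimage
    (s := Set.univ.pi fun i => I (c i)) (MeasurableSet.univ_pi hm).nullMeasurableSet
  rw [volume_pi_pi] at h
  have e : {y : Euc n | ∀ i, y i ∈ I (c i)} =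
     (WithLp.ofLp ⁻¹' (Set.univ.pi fun i => I (c i)) : Set (Euc n)) := by
    ext y; simp
  rw [e, h]
  simp only [hI, Finset.prod_const, Finset.card_univ, Fintype.card_fin]
  rw [ENNReal.ofReal_pow hs]

lemma vol_ccube {n : ℕ} (c : Euc n) {s : ℝ} (hs : 0 ≤ s) :
    volume {y : Euc n | ∀ i, |y i - c i| ≤ s / 2} = ENNReal.ofReal (s ^ n) := by
  have := vol_box c hs (fun t => Set.Icc (t - s/2) (t + s/2)) (by
    intro i; rw [Real.volume_Icc]; congr 1; ring) (fun i => measurableSet_Icc)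
  rw [← this]
  congr 1
  ext y
  apply forall_congr'
  intro i
  rw [Set.mem_Icc, abs_le]
  constructor <;> rintro ⟨h1, h2⟩ <;> constructor <;> linarith

lemma norm_le_of_coord {n : ℕ} {x : Euc n} {s : ℝ} (hs : 0 ≤ s) (h : ∀ i, |x i| ≤ s) :
    ‖x‖ ≤ Real.sqrt n * s := by
  rw [EuclideanSpace.norm_eq]
  apply Real.sqrt_le_iff.2
  refine ⟨by positivity, ?_⟩
  rw [mul_pow, Real.sq_sqrt (by positivity)]
  calc ∑ i, ‖x i‖ ^ 2 ≤ ∑ i : Fin n, s ^ 2 := by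
        apply Finset.sum_le_sum
        intro i _
        exact pow_le_pow_left₀ (norm_nonneg _) (by simpa using h i) 2
    _ = _ := by simp

lemma coord_le_norm {n : ℕ} (x : Euc n) (i : Fin n) : |x i| ≤ ‖x‖ := by
  have := PiLp.norm_apply_le x i
  simpa using this

lemma slide_cube {n : ℕ} (hn : 2 ≤ n) {lam Lam : ℝ} (hlam : 0 < lam) (hLam : lam ≤ Lam)
    {Ω : Set (Euc n)} {v : Euc n → ℝ} (hv : ContinuousOn v Ω)
    (hs : ViscSupersol lam Lam Ω v) {a r : ℝ} (ha : 0 < a) (hr : 0 < r) {y0 p : Euc n}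
    (hΩ : closedBall y0 (3 * r / 8) ⊆ Ω)
    (H : ∀ x ∈ Ω, 3 * r / 8 < ‖x - y0‖ →
      v y0 + ⟪p, x - y0⟫_ℝ ≤ v x + a / 2 * (‖x - y0‖ ^ 2 - r / 4 * ‖x - y0‖)) :
    ENNReal.ofReal ((lam / (lam + ((n : ℝ) - 1) * Lam)) ^ n * (1 / (4 * Real.sqrt n)) ^ n * r ^ n)
      ≤ volume (Gm a v Ω ∩ closedBall y0 (3 * r / 8)) := by
  have hn1 : (2:ℝ) ≤ n := by exact_mod_cast hn
  have hq : 0 < Real.sqrt n := by positivity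
  set s := r / (4 * Real.sqrt n) with hsd
  have hsp : 0 < s := by positivity
  set y1 : Euc n := y0 + a⁻¹ • p with hy1
  set B : Set (Euc n) := {y | ∀ i, |y i - y1 i| ≤ s / 2} with hB
  have hBs : ∀ y ∈ B, ‖y - y1‖ ≤ r / 8 := by
    intro y hy
    have := norm_le_of_coord (x := y - y1) (s := s / 2) (by positivity) (fun i => by simpa using hy i)
    refine this.trans (le_of_eq ?_)
    rw [hsd]; field_simp; norm_num
  have hBc : IsCompact B := by
    apply (isCompact_closedBall y1 (r / 8)).of_isClosed_subset
    · have : B = ⋂ i, {y | |y i - y1 i| ≤ s / 2} := by ext; simp [hB]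
      rw [this]
      apply isClosed_iInter
      intro i
      exact isClosed_le (f := fun y : Euc n => |y i - y1 i|) (g := fun _ => s / 2) (by fun_prop) continuous_const
    · intro y hy
      rw [mem_closedBall, dist_eq_norm]; exact hBs y hy
  have hmain := sliding hn hlam hLam hv hs ha hBc (isCompact_closedBall y0 (3 * r / 8)) hΩ (by
    intro y hy
    have hc : ContinuousOn (fun x => v x + a / 2 * ‖x - y‖ ^ 2) (closedBall y0 (3 * r / 8)) := by
      apply (hv.mono hΩ).add
      fun_prop
    have hy0 : y0 ∈ closedBall y0 (3 * r / 8) := by simp; positivity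
    obtain ⟨x, hx, hm⟩ := (isCompact_closedBall y0 (3 * r / 8)).exists_isMinOn ⟨y0, hy0⟩ hc
    refine ⟨x, hx, ?_⟩
    intro x' hx'
    by_cases hin : x' ∈ closedBall y0 (3 * r / 8)
    · exact hm hin
    · have h1 : v x + a / 2 * ‖x - y‖ ^ 2 ≤ v y0 + a / 2 * ‖y0 - y‖ ^ 2 := hm hy0
      refine h1.trans ?_
      rw [mem_closedBall, dist_eq_norm, not_le] at hin
      have h2 := H x' hx' hin
      have e1 : ‖x' - y‖ ^ 2 = ‖y0 - y‖ ^ 2 + 2 * ⟪y0 - y, x' - y0⟫_ℝ + ‖x' - y0‖ ^ 2 := by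
        have : x' - y = (y0 - y) + (x' - y0) := by abel
        rw [this, norm_add_sq_real]
      have e2 : ⟪y0 - y, x' - y0⟫_ℝ = - ⟪y - y1, x' - y0⟫_ℝ - a⁻¹ * ⟪p, x' - y0⟫_ℝ := by
        rw [← real_inner_smul_left, ← inner_neg_left, ← inner_sub_left]
        congr 1
        rw [hy1]; abel
      have e3 : ⟪y - y1, x' - y0⟫_ℝ ≤ r / 8 * ‖x' - y0‖ :=
        (real_inner_le_norm _ _).trans (mul_le_mul_of_nonneg_right (hBs y hy) (norm_nonneg _))
      have e4 := mul_le_mul_of_nonneg_left e3 ha.le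
      have e5 : a * (a⁻¹ * ⟪p, x' - y0⟫_ℝ) = ⟪p, x' - y0⟫_ℝ := by
        field_simp
      rw [e1, e2]
      linear_combination h2 + e4 + e5)
  rw [hB, vol_ccube _ hsp.le] at hmain
  set D := lam + ((n:ℝ) - 1) * Lam with hD
  have hDp : 0 < D := by
    have : 0 < ((n:ℝ) - 1) * Lam := mul_pos (by linarith) (by linarith)
    rw [hD]; linarith
  have e : (lam / D) ^ n * (1 / (4 * Real.sqrt n)) ^ n * r ^ n = (lam / D) ^ n * s ^ n := by
    rw [mul_assoc, ← mul_pow (1 / (4 * Real.sqrt n))]; congr 2; rw [hsd]; ring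
  rw [e, ENNReal.ofReal_mul (by positivity)]
  calc _ ≤ ENNReal.ofReal ((lam / D) ^ n) * (ENNReal.ofReal ((D / lam) ^ n) * volume (Gm a v Ω ∩ closedBall y0 (3 * r / 8))) := by
        gcongr
    _ = _ := by
        rw [← mul_assoc, ← ENNReal.ofReal_mul (by positivity), ← mul_pow]
        have : lam / D * (D / lam) = 1 := by field_simp
        rw [this]; simp

/-- the constant M -/
def bigM (n : ℕ) (lam Lam : ℝ) : ℝ := 884736 * (n : ℝ) ^ 3 *
          (36 * (n : ℝ)) ^ (max (1 : ℝ) (((n : ℝ) - 1) * Lam / lam - 1))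

/-- the constant 1 - σ -/
def smallEta (n : ℕ) (lam Lam : ℝ) : ℝ :=
  (lam / (lam + ((n : ℝ) - 1) * Lam)) ^ n * (1 / (4 * Real.sqrt n)) ^ n

lemma bigM_ge {n : ℕ} (hn : 2 ≤ n) (lam Lam : ℝ) : 884736 ≤ bigM n lam Lam := by
  have hn1 : (2:ℝ) ≤ n := by exact_mod_cast hn
  have h1 : (1:ℝ) ≤ (36 * (n : ℝ)) ^ (max (1 : ℝ) (((n : ℝ) - 1) * Lam / lam - 1)) :=
    Real.one_le_rpow (by linarith) (le_trans zero_le_one (le_max_left _ _))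
  have h2 : (1:ℝ) ≤ (n:ℝ) ^ 3 := one_le_pow₀ (by linarith)
  unfold bigM
  nlinarith [mul_le_mul h2 h1 zero_le_one (by positivity)]

lemma base_est {n : ℕ} (hn : 2 ≤ n) {lam Lam : ℝ} (hlam : 0 < lam) (hLam : lam ≤ Lam)
    {Ω : Set (Euc n)} {v : Euc n → ℝ} (hv : ContinuousOn v Ω)
    (hs : ViscSupersol lam Lam Ω v) (hB : closedBall 0 (2 * Real.sqrt n) ⊆ Ω)
    (hbd : ∀ x ∈ Ω, |v x| ≤ 1 / 4) :
    ENNReal.ofReal (smallEta n lam Lam) ≤ volume (Gm (bigM n lam Lam) v Ω ∩ cube 1 0) := by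
  have hn1 : (2:ℝ) ≤ n := by exact_mod_cast hn
  have hM := bigM_ge hn lam Lam
  have hq : 1 ≤ Real.sqrt n := Real.one_le_sqrt.2 (by linarith)
  have hsub : closedBall (0 : Euc n) (3 * 1 / 8) ⊆ Ω :=
    (closedBall_subset_closedBall (by linarith)).trans hB
  have h := slide_cube hn hlam hLam hv hs (a := bigM n lam Lam) (r := 1) (by linarith) one_pos
    (y0 := 0) (p := 0) hsub (by
      intro x hx hd
      have h1 := abs_le.1 (hbd x hx)
      have h2 := abs_le.1 (hbd 0 (hsub (by simp; norm_num)))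
      rw [inner_zero_left]
      set d := ‖x - 0‖
      have h3 : 3/8 * (1/8) ≤ d * (d - 1/4) := by nlinarith
      nlinarith)
  rw [one_pow, mul_one] at h
  refine h.trans (measure_mono ?_)
  apply Set.inter_subset_inter_right
  intro x hx i
  rw [mem_closedBall, dist_eq_norm] at hx
  have := coord_le_norm (x - 0) i
  simp only [PiLp.sub_apply] at this
  linarith

lemma key_est {n : ℕ} (hn : 2 ≤ n) {lam Lam : ℝ} (hlam : 0 < lam) (hLam : lam ≤ Lam)
    {Ω : Set (Euc n)} {v : Euc n → ℝ} (hv : ContinuousOn v Ω)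
    (hs : ViscSupersol lam Lam Ω v) {c x1 : Euc n} {r K : ℝ} (hr : 0 < r) (hK : 0 < K)
    (hB : closedBall c (3 * Real.sqrt n * r) ⊆ Ω) (hx1 : x1 ∈ Gm K v Ω)
    (hxc : ∀ i, |x1 i - c i| ≤ 3 * r / 2) :
    ENNReal.ofReal (smallEta n lam Lam * r ^ n) ≤
      volume (Gm (bigM n lam Lam * K) v Ω ∩ cube r c) := by
  have hn1 : (2:ℝ) ≤ n := by exact_mod_cast hn
  have hM := bigM_ge hn lam Lam
  have hq : 1 ≤ Real.sqrt n := Real.one_le_sqrt.2 (by linarith)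
  have hqq : Real.sqrt n ^ 2 = n := Real.sq_sqrt (by linarith)
  set q := Real.sqrt n with hqd
  set α := max (1 : ℝ) (((n : ℝ) - 1) * Lam / lam - 1) with hα
  have hα1 : 1 ≤ α := le_max_left _ _
  have hα2 : ((n:ℝ) - 1) * Lam ≤ lam * (α + 1) := by
    have : ((n : ℝ) - 1) * Lam / lam - 1 ≤ α := le_max_right _ _
    have h2 : ((n : ℝ) - 1) * Lam / lam ≤ α + 1 := by linarith
    rw [div_le_iff₀ hlam] at h2
    linarith
  obtain ⟨hx1Ω, p, hp⟩ := hx1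
  have hx1c : ‖x1 - c‖ ≤ q * (3 * r / 2) :=
    norm_le_of_coord (by positivity) (fun i => by simpa using hxc i)
  have hqr : r ≤ q * r := by nlinarith
  have hρ1 : r / (12 * q) ≤ r / 12 := by
    apply div_le_div_of_nonneg_left hr.le (by norm_num); linarith
  obtain ⟨y0, hy0, hy0v⟩ := barrier hlam hLam hv hs (α := α + 1) (by linarith) hα2
    (R := 3 * q * r) (ρ := r / (12 * q)) (K := K) (by positivity) (by nlinarith) hK hB
    (by nlinarith) hp
  set P := (36 * (n:ℝ)) ^ α with hP
  have hP1 : 1 ≤ P := Real.one_le_rpow (by linarith) (by linarith)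
  have eC : 3 * K * (3 * q * r) ^ 2 * (3 * q * r / (r / (12 * q))) ^ (α + 1) =
      972 * n ^ 2 * P * K * r ^ 2 := by
    have : 3 * q * r / (r / (12 * q)) = 36 * n := by
      rw [← hqq]; field_simp; norm_num
    rw [this, Real.rpow_add_one (by positivity), mul_pow, mul_pow, hqq]
    ring
  rw [eC] at hy0v
  have eM : bigM n lam Lam = 884736 * n ^ 3 * P := rfl
  have hD : ‖y0 - x1‖ ≤ 2 * q * r := by
    have : y0 - x1 = (y0 - c) - (x1 - c) := by abel
    rw [this]
    refine (norm_sub_le _ _).trans ?_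
    nlinarith
  have hF : closedBall y0 (3 * r / 8) ⊆ closedBall c (11 * r / 24) := by
    apply closedBall_subset_closedBall'
    rw [dist_eq_norm]
    linarith
  have h := slide_cube hn hlam hLam hv hs (a := bigM n lam Lam * K) (r := r)
    (by positivity) hr (y0 := y0) (p := p)
    (hF.trans ((closedBall_subset_closedBall (by nlinarith)).trans hB)) (by
      intro x hx hd
      have h1 := hp x hx
      have e1 : ⟪p, x - x1⟫_ℝ = ⟪p, x - y0⟫_ℝ + ⟪p, y0 - x1⟫_ℝ := by
        rw [← inner_add_right]; congr 1; abel
      have e2 : ‖x - x1‖ ≤ ‖x - y0‖ + 2 * q * r := by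
        have : x - x1 = (x - y0) + (y0 - x1) := by abel
        rw [this]
        exact (norm_add_le _ _).trans (by linarith)
      set d := ‖x - y0‖
      have hrd : r ≤ 8 / 3 * d := by linarith
      have hdp : 0 < d := by linarith
      have e3 : ‖x - x1‖ ≤ 7 * q * d := by nlinarith
      have e4 : ‖x - x1‖ ^ 2 ≤ 49 * n * d ^ 2 := by
        calc _ ≤ (7 * q * d) ^ 2 := pow_le_pow_left₀ (norm_nonneg _) e3 2
          _ = _ := by rw [mul_pow, mul_pow, hqq]; norm_num
      have e5 : r ^ 2 ≤ 64 / 9 * d ^ 2 := by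
        calc _ ≤ (8 / 3 * d) ^ 2 := pow_le_pow_left₀ hr.le hrd 2
          _ = _ := by ring
      have e6 : 1 / 3 * d ^ 2 ≤ d ^ 2 - r / 4 * d := by nlinarith
      have f1 : 972 * n ^ 2 * P * K * r ^ 2 ≤ 972 * n ^ 2 * P * K * (64 / 9 * d ^ 2) := by gcongr
      have f2 : K / 2 * ‖x - x1‖ ^ 2 ≤ K / 2 * (49 * n * d ^ 2) := by gcongr
      have f3 : bigM n lam Lam * K / 2 * (1 / 3 * d ^ 2) ≤
        bigM n lam Lam * K / 2 * (d ^ 2 - r / 4 * d) := by gcongr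
      have f4 : 972 * n ^ 2 * P * K * (64 / 9 * d ^ 2) + K / 2 * (49 * n * d ^ 2) ≤
          bigM n lam Lam * K / 2 * (1 / 3 * d ^ 2) := by
        rw [eM]
        have g1 : (n:ℝ) ^ 2 * P ≤ n ^ 3 * P := by
          gcongr
          · linarith
          · norm_num
        have g2 : (n:ℝ) ≤ n ^ 3 * P := by
          calc (n:ℝ) = n ^ 1 * 1 := by ring
            _ ≤ n ^ 3 * P := by
              gcongr
              · linarith
              · norm_num
        have g3 : 972 * 64 / 9 * (n ^ 2 * P) + 49 / 2 * n ≤ 147456 * (n ^ 3 * P) := by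
          have : 0 < (n:ℝ) ^ 3 * P := by positivity
          linarith
        have := mul_le_mul_of_nonneg_right g3 (show 0 ≤ K * d ^ 2 by positivity)
        linear_combination this
      linarith)
  refine h.trans (measure_mono ?_)
  apply Set.inter_subset_inter_right
  intro x hx i
  have hx := hF hx
  rw [mem_closedBall, dist_eq_norm] at hx
  have := coord_le_norm (x - c) i
  simp only [PiLp.sub_apply] at this
  linarith

lemma am_open {n : ℕ} {Ω : Set (Euc n)} (hΩ : IsOpen Ω) {v : Euc n → ℝ} (hv : ContinuousOn v Ω)
    {K : ℝ} (hK : 0 ≤ K) : IsOpen (Am K v Ω) := by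
  rw [isOpen_iff_mem_nhds]
  intro x hx
  obtain ⟨δ, hδ, hδΩ⟩ := Metric.nhds_basis_closedBall.mem_iff.1 (hΩ.mem_nhds hx.1)
  obtain ⟨b, hb⟩ := (isCompact_closedBall x δ).exists_bound_of_continuousOn (hv.mono hδΩ)
  set F := closedBall x (δ / 2) with hF
  have hFΩ : F ⊆ Ω := (closedBall_subset_closedBall (by linarith)).trans hδΩ
  have hFc : IsCompact F := isCompact_closedBall x (δ / 2)
  set C := (2 * b + K / 2 * (δ / 2) ^ 2) / (δ / 2) with hC
  set T : Set (Euc n × Euc n) := (F ×ˢ closedBall 0 C) ∩ ⋂ x' ∈ Ω, ((F ×ˢ closedBall 0 C) ∩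
    (fun q : Euc n × Euc n => v q.1 + ⟪q.2, x' - q.1⟫_ℝ - K / 2 * ‖x' - q.1‖ ^ 2) ⁻¹' Set.Iic (v x'))
    with hT
  have hFB : IsCompact (F ×ˢ closedBall (0 : Euc n) C) := hFc.prod (isCompact_closedBall _ _)
  have hTc : IsCompact T := by
    apply hFB.inter_right
    apply isClosed_biInter
    intro x' _
    refine ContinuousOn.preimage_isClosed_of_isClosed ?_ hFB.isClosed isClosed_Iic
    have h1 : ContinuousOn (fun q : Euc n × Euc n => v q.1) (F ×ˢ closedBall 0 C) :=
      hv.comp continuousOn_fst (fun q hq => hFΩ hq.1)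
    apply ContinuousOn.sub
    · apply h1.add
      apply Continuous.continuousOn
      fun_prop
    · apply Continuous.continuousOn
      fun_prop
  have hcl : IsClosed (Prod.fst '' T) := (hTc.image continuous_fst).isClosed
  have hsub : Prod.fst '' T ⊆ Gm K v Ω := by
    rintro _ ⟨q, hq, rfl⟩
    refine ⟨hFΩ hq.1.1, q.2, ?_⟩
    intro x' hx'
    have := (Set.mem_iInter₂.1 hq.2 x' hx').2
    exact this
  have hxn : x ∉ Prod.fst '' T := fun h => hx.2 (hsub h)
  filter_upwards [hΩ.mem_nhds hx.1, hcl.isOpen_compl.mem_nhds hxn,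
    Metric.closedBall_mem_nhds x (half_pos hδ)] with z hz1 hz2 hz3
  refine ⟨hz1, ?_⟩
  rintro ⟨_, p, hp⟩
  apply hz2
  have hpC : ‖p‖ ≤ C := by
    by_cases hp0 : p = 0
    · rw [hp0, norm_zero]
      have : 0 ≤ b := (norm_nonneg _).trans (hb x (mem_closedBall_self hδ.le))
      positivity
    have hpn : 0 < ‖p‖ := norm_pos_iff.2 hp0
    set x' := z + (δ / 2 * ‖p‖⁻¹) • p with hx'
    have e0 : x' - z = (δ / 2 * ‖p‖⁻¹) • p := by rw [hx']; abel
    have e1 : ‖x' - z‖ = δ / 2 := by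
      rw [e0, norm_smul, Real.norm_of_nonneg (by positivity)]
      field_simp
    have hx'm : x' ∈ closedBall x δ := by
      rw [mem_closedBall]
      calc dist x' x ≤ dist x' z + dist z x := dist_triangle _ _ _
        _ ≤ δ / 2 + δ / 2 := by
          rw [dist_eq_norm x' z, e1]
          gcongr
          exact hz3
        _ = δ := by ring
    have h1 := hp x' (hδΩ hx'm)
    have h2 := abs_le.1 (hb x' hx'm)
    have h3 := abs_le.1 (hb z (closedBall_subset_closedBall (by linarith) hz3))
    have e2 : ⟪p, x' - z⟫_ℝ = δ / 2 * ‖p‖ := by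
      rw [e0, real_inner_smul_right, real_inner_self_eq_norm_sq]
      field_simp
    rw [e2, e1] at h1
    rw [hC, le_div_iff₀ (by positivity)]
    linarith
  refine ⟨(z, p), ⟨⟨hz3, by simpa using hpC⟩, ?_⟩, rfl⟩
  refine Set.mem_iInter₂.2 fun x' hx' => ⟨⟨hz3, by simpa using hpC⟩, ?_⟩
  exact hp x' hx'

/-- dyadic key of a point at level j -/
def dkey {n : ℕ} (j : ℕ) (x : Euc n) : Fin n → ℤ := fun i => ⌊(2:ℝ) ^ j * (x i + 1 / 2)⌋

/-- dyadic cube with given key -/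
def dcube {n : ℕ} (j : ℕ) (k : Fin n → ℤ) : Set (Euc n) := {x | dkey j x = k}

/-- parent key -/
def dpar {n : ℕ} (k : Fin n → ℤ) : Fin n → ℤ := fun i => k i / 2

lemma dpar_dkey {n : ℕ} (j : ℕ) (x : Euc n) : dpar (dkey (j + 1) x) = dkey j x := by
  funext i
  have h := Int.floor_div_natCast ((2:ℝ) ^ (j + 1) * (x i + 1 / 2)) 2
  simp only [dpar, dkey]
  rw [pow_succ] at *
  have e : (2:ℝ) ^ j * 2 * (x i + 1 / 2) / ((2:ℕ):ℝ) = 2 ^ j * (x i + 1 / 2) := by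
    push_cast; ring
  rw [e] at h
  exact_mod_cast h.symm

lemma dkey_le {n : ℕ} {j : ℕ} {x y : Euc n} (h : dkey j x = dkey j y) {i : ℕ} (hi : i ≤ j) :
    dkey i x = dkey i y := by
  induction j with
  | zero => have : i = 0 := by omega
            rw [this]; exact h
  | succ j ih =>
    rcases Nat.lt_or_ge j i with h1 | h1
    · have : i = j + 1 := by omega
      rw [this]; exact h
    · apply ih _ h1
      rw [← dpar_dkey j x, ← dpar_dkey j y, h]

lemma mem_dcube {n : ℕ} {j : ℕ} {k : Fin n → ℤ} {x : Euc n} : x ∈ dcube j k ↔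
    ∀ i, x i ∈ Set.Ico ((k i : ℝ) / 2 ^ j - 1 / 2) ((k i + 1 : ℝ) / 2 ^ j - 1 / 2) := by
  have h2 : (0:ℝ) < 2 ^ j := by positivity
  constructor
  · intro h i
    have := congrFun h i
    simp only [dkey] at this
    rw [Int.floor_eq_iff] at this
    constructor
    · rw [sub_le_iff_le_add, div_le_iff₀ h2]; linarith
    · rw [lt_sub_iff_add_lt, lt_div_iff₀ h2]; linarith
  · intro h
    funext i
    simp only [dkey]
    rw [Int.floor_eq_iff]
    have h3 := (h i).1
    have h4 := (h i).2
    rw [sub_le_iff_le_add, div_le_iff₀ h2] at h3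
    rw [lt_sub_iff_add_lt, lt_div_iff₀ h2] at h4
    constructor <;> linarith

/-- center of a dyadic cube -/
def dcen {n : ℕ} (j : ℕ) (k : Fin n → ℤ) : Euc n :=
  WithLp.toLp 2 (fun i => (k i + 1 / 2 : ℝ) / 2 ^ j - 1 / 2)

lemma mem_dcube' {n : ℕ} {j : ℕ} {k : Fin n → ℤ} {x : Euc n} : x ∈ dcube j k ↔
    ∀ i, x i ∈ Set.Ico (dcen j k i - (1 / 2 ^ j) / 2) (dcen j k i + (1 / 2 ^ j) / 2) := by
  rw [mem_dcube]
  apply forall_congr'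
  intro i
  have e1 : (k i : ℝ) / 2 ^ j - 1 / 2 = dcen j k i - (1 / 2 ^ j) / 2 := by
    simp only [dcen]; ring
  have e2 : (k i + 1 : ℝ) / 2 ^ j - 1 / 2 = dcen j k i + (1 / 2 ^ j) / 2 := by
    simp only [dcen]; ring
  rw [e1, e2]

lemma vol_dcube {n : ℕ} (j : ℕ) (k : Fin n → ℤ) :
    volume (dcube j k : Set (Euc n)) = ENNReal.ofReal ((1 / 2 ^ j) ^ n) := by
  have := vol_box (dcen j k) (s := 1 / 2 ^ j) (by positivity)
    (fun t => Set.Ico (t - (1 / 2 ^ j)/2) (t + (1 / 2 ^ j)/2)) (by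
    intro i; rw [Real.volume_Ico]; congr 1; ring) (fun i => measurableSet_Ico)
  rw [← this]
  congr 1
  ext y
  exact mem_dcube'

lemma cube_sub_dcube {n : ℕ} (j : ℕ) (k : Fin n → ℤ) : cube (1 / 2 ^ j) (dcen j k) ⊆ dcube j k := by
  intro x hx
  rw [mem_dcube']
  intro i
  have := abs_lt.1 (hx i)
  constructor <;> linarith

lemma meas_dcube {n : ℕ} (j : ℕ) (k : Fin n → ℤ) : MeasurableSet (dcube j k : Set (Euc n)) := by
  have : (dcube j k : Set (Euc n)) = ⋂ i, (fun x : Euc n => x i) ⁻¹'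
      Set.Ico ((k i : ℝ) / 2 ^ j - 1 / 2) ((k i + 1 : ℝ) / 2 ^ j - 1 / 2) := by
    ext x; rw [mem_dcube]; simp
  rw [this]
  apply MeasurableSet.iInter
  intro i
  apply measurableSet_Ico.preimage
  have : Continuous (fun x : Euc n => x i) := by fun_prop
  exact this.measurable

lemma cz {n : ℕ} {A B : Set (Euc n)} (hA : IsOpen A) {s : ℝ≥0∞} (hs : s < 1)
    (h0 : volume (A ∩ dcube 0 0) ≤ s * volume (dcube 0 0 : Set (Euc n)))
    (hb : ∀ j, ∀ k : Fin n → ℤ, ∀ x ∈ (dcube 0 0 : Set (Euc n)), dpar k = dkey j x →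
      s * volume (dcube (j + 1) k : Set (Euc n)) < volume (A ∩ dcube (j + 1) k) → x ∈ B) :
    volume (A ∩ dcube 0 0) ≤ s * volume (B ∩ dcube 0 0) := by
  set HB : ℕ → (Fin n → ℤ) → Prop := fun j k => ∃ k', dpar k' = k ∧
    s * volume (dcube (j + 1) k' : Set (Euc n)) < volume (A ∩ dcube (j + 1) k') with hHB
  set U : ℕ → Set (Euc n) := fun j => {x | x ∈ (dcube 0 0 : Set (Euc n)) ∧ HB j (dkey j x) ∧
    ∀ i < j, ¬ HB i (dkey i x)} with hU
  have hinv : ∀ j x y, dkey j x = dkey j y → x ∈ U j → y ∈ U j := by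
    rintro j x y hxy ⟨h1, h2, h3⟩
    refine ⟨?_, ?_, ?_⟩
    · exact (dkey_le hxy (Nat.zero_le j)).symm.trans h1
    · rw [← hxy]; exact h2
    · intro i hi
      rw [← dkey_le hxy hi.le]; exact h3 i hi
  have hUm : ∀ j, MeasurableSet (U j) := by
    intro j
    have : U j = ⋃ k ∈ {k | ∃ x ∈ U j, dkey j x = k}, dcube j k := by
      ext y
      simp only [Set.mem_iUnion, exists_prop]
      constructor
      · intro hy
        exact ⟨dkey j y, ⟨y, hy, rfl⟩, rfl⟩
      · rintro ⟨k, ⟨x, hx, hxk⟩, hy⟩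
        exact hinv j x y (hxk.trans hy.symm) hx
    rw [this]
    exact MeasurableSet.biUnion (Set.to_countable _) (fun k _ => meas_dcube j k)
  have hgood : ∀ j, ∀ x ∈ U j, volume (A ∩ dcube j (dkey j x)) ≤ s * volume (dcube j (dkey j x) : Set (Euc n)) := by
    intro j x hx
    cases j with
    | zero =>
      have : dkey 0 x = 0 := hx.1
      rw [this]; exact h0
    | succ i =>
      by_contra hcon
      rw [not_le] at hcon
      exact hx.2.2 i (Nat.lt_succ_self i) ⟨dkey (i + 1) x, dpar_dkey i x, hcon⟩
  have hAU : ∀ j, volume (A ∩ U j) ≤ s * volume (U j) := by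
    intro j
    have hdis : Pairwise (Function.onFun Disjoint fun k : Fin n → ℤ => U j ∩ dcube j k) := by
      intro k k' hkk
      rw [Function.onFun, Set.disjoint_left]
      intro x hx hx'
      exact hkk (hx.2.symm.trans hx'.2)
    have hun : U j = ⋃ k : Fin n → ℤ, U j ∩ dcube j k := by
      ext x
      simp only [Set.mem_iUnion, Set.mem_inter_iff]
      exact ⟨fun h => ⟨dkey j x, h, rfl⟩, fun ⟨k, h, _⟩ => h⟩
    have hv1 : volume (U j) = ∑' k : Fin n → ℤ, volume (U j ∩ dcube j k) := by
      conv_lhs => rw [hun]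
      exact measure_iUnion hdis (fun k => (hUm j).inter (meas_dcube j k))
    have hv2 : volume (A ∩ U j) ≤ ∑' k : Fin n → ℤ, volume (A ∩ (U j ∩ dcube j k)) := by
      conv_lhs => rw [hun, Set.inter_iUnion]
      exact measure_iUnion_le _
    rw [hv1, ← ENNReal.tsum_mul_left]
    refine hv2.trans (ENNReal.tsum_le_tsum fun k => ?_)
    rcases (U j ∩ dcube j k).eq_empty_or_nonempty with he | ⟨x, hx⟩
    · rw [he]; simp
    · have e : U j ∩ dcube j k = dcube j k := by
        apply Set.inter_eq_right.2
        intro y hy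
        exact hinv j x y (hx.2.trans hy.symm) hx.1
      rw [e]
      have := hgood j x hx.1
      rw [show dkey j x = k from hx.2] at this
      exact this
  have hcov : A ∩ dcube 0 0 ⊆ ⋃ j, A ∩ U j := by
    rintro x ⟨hxA, hx0⟩
    have hex : ∃ j, HB j (dkey j x) := by
      obtain ⟨δ, hδ, hδA⟩ := Metric.isOpen_iff.1 hA x hxA
      obtain ⟨j, hj⟩ := exists_pow_lt_of_lt_one (show 0 < δ / (Real.sqrt n + 1) by positivity)
        (show (1/2:ℝ) < 1 by norm_num)
      refine ⟨j, dkey (j + 1) x, dpar_dkey j x, ?_⟩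
      have hsub : dcube (j + 1) (dkey (j + 1) x) ⊆ A := by
        intro y hy
        apply hδA
        rw [mem_ball, dist_eq_norm]
        have hxx : x ∈ dcube (j + 1) (dkey (j + 1) x) := rfl
        rw [mem_dcube'] at hy hxx
        have h1 : ‖y - x‖ ≤ Real.sqrt n * (1 / 2 ^ (j + 1)) := by
          apply norm_le_of_coord (by positivity)
          intro i
          simp only [PiLp.sub_apply]
          have a1 := hy i
          have a2 := hxx i
          rw [abs_le]
          constructor <;> linarith [a1.1, a1.2, a2.1, a2.2]
        have h2 : (1:ℝ) / 2 ^ (j + 1) ≤ (1 / 2) ^ j := by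
          rw [one_div_pow]
          apply one_div_le_one_div_of_le (by positivity)
          exact pow_le_pow_right₀ (by norm_num) (Nat.le_succ j)
        rw [lt_div_iff₀ (by positivity)] at hj
        have h3 : (0:ℝ) < (1 / 2) ^ j := by positivity
        calc ‖y - x‖ ≤ Real.sqrt n * (1 / 2 ^ (j + 1)) := h1
          _ ≤ Real.sqrt n * (1 / 2) ^ j := by gcongr
          _ < δ := by nlinarith
      rw [Set.inter_eq_right.2 hsub, vol_dcube]
      have hp : ENNReal.ofReal ((1 / 2 ^ (j + 1)) ^ n) ≠ 0 := by
        rw [← pos_iff_ne_zero, ENNReal.ofReal_pos]; positivity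
      calc s * _ < 1 * ENNReal.ofReal ((1 / 2 ^ (j + 1)) ^ n) :=
            ENNReal.mul_lt_mul_left hp ENNReal.ofReal_ne_top hs
        _ = _ := one_mul _
    classical
    refine Set.mem_iUnion.2 ⟨Nat.find hex, hxA, hx0, Nat.find_spec hex, fun i hi => Nat.find_min hex hi⟩
  have hUd : Pairwise (Function.onFun Disjoint U) := by
    intro i j hij
    rw [Function.onFun, Set.disjoint_left]
    intro x hx hx'
    rcases lt_or_gt_of_ne hij with h | h
    · exact hx'.2.2 i h hx.2.1
    · exact hx.2.2 j h hx'.2.1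
  calc volume (A ∩ dcube 0 0) ≤ volume (⋃ j, A ∩ U j) := measure_mono hcov
    _ ≤ ∑' j, volume (A ∩ U j) := measure_iUnion_le _
    _ ≤ ∑' j, s * volume (U j) := ENNReal.tsum_le_tsum hAU
    _ = s * volume (⋃ j, U j) := by rw [ENNReal.tsum_mul_left, measure_iUnion hUd hUm]
    _ ≤ s * volume (B ∩ dcube 0 0) := by
      gcongr
      apply Set.iUnion_subset
      rintro j x ⟨h1, ⟨k, hk1, hk2⟩, _⟩
      exact ⟨hb j k x h1 hk1 hk2, h1⟩

lemma eta_bounds {n : ℕ} (hn : 2 ≤ n) {lam Lam : ℝ} (hlam : 0 < lam) (hLam : lam ≤ Lam) :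
    0 < smallEta n lam Lam ∧ smallEta n lam Lam < 1 := by
  have hn1 : (2:ℝ) ≤ n := by exact_mod_cast hn
  have hq : 1 ≤ Real.sqrt n := Real.one_le_sqrt.2 (by linarith)
  have hL : 0 < ((n:ℝ) - 1) * Lam := mul_pos (by linarith) (by linarith)
  unfold smallEta
  refine ⟨by positivity, ?_⟩
  rw [← mul_pow]
  apply pow_lt_one₀ (by positivity) _ (by omega)
  have h1 : lam / (lam + ((n:ℝ) - 1) * Lam) ≤ 1 := by
    rw [div_le_one (by positivity)]; linarith
  have h2 : 1 / (4 * Real.sqrt n) < 1 := by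
    rw [div_lt_one (by positivity)]; linarith
  have h3 : 0 < 1 / (4 * Real.sqrt n) := by positivity
  nlinarith

lemma dcube_zero_sub {n : ℕ} {x : Euc n} (hx : x ∈ (dcube 0 0 : Set (Euc n))) (i : Fin n) :
    -(1/2) ≤ x i ∧ x i < 1/2 := by
  have := mem_dcube.1 hx i
  simp only [Pi.zero_apply, Int.cast_zero, pow_zero] at this
  constructor <;> linarith [this.1, this.2]

lemma dcube_zero_Ω {n : ℕ} {Ω : Set (Euc n)} (hB : closedBall 0 (2 * Real.sqrt n) ⊆ Ω) :
    (dcube 0 0 : Set (Euc n)) ⊆ Ω := by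
  intro x hx
  apply hB
  rw [mem_closedBall, dist_eq_norm, sub_zero]
  have := norm_le_of_coord (x := x) (s := 1/2) (by norm_num) (fun i => by
    have := dcube_zero_sub hx i
    rw [abs_le]; constructor <;> linarith [this.1, this.2])
  have h2 := Real.sqrt_nonneg (n:ℝ)
  linarith

lemma am_small {n : ℕ} {Ω : Set (Euc n)} (hΩ : IsOpen Ω) {v : Euc n → ℝ} (hv : ContinuousOn v Ω)
    {K η : ℝ} (hK : 0 ≤ K) (hη0 : 0 ≤ η) (hη : η < 1) {j : ℕ} {k : Fin n → ℤ}
    (h : ENNReal.ofReal (η * (1 / 2 ^ j) ^ n) ≤ volume (Gm K v Ω ∩ cube (1 / 2 ^ j) (dcen j k))) :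
    volume (Am K v Ω ∩ dcube j k) ≤ ENNReal.ofReal (1 - η) * volume (dcube j k : Set (Euc n)) := by
  have hA := (am_open hΩ hv hK).measurableSet
  have h1 := measure_inter_add_sdiff (μ := volume) (dcube j k : Set (Euc n)) hA
  have h2 : ENNReal.ofReal (η * (1 / 2 ^ j) ^ n) ≤ volume ((dcube j k : Set (Euc n)) \ Am K v Ω) := by
    refine h.trans (measure_mono ?_)
    intro x hx
    exact ⟨cube_sub_dcube j k hx.2, fun h => h.2 hx.1⟩
  rw [Set.inter_comm]
  rw [vol_dcube] at h1 ⊢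
  set V : ℝ := (1 / 2 ^ j) ^ n
  have hV : 0 ≤ V := by positivity
  have e : ENNReal.ofReal V = ENNReal.ofReal (1 - η) * ENNReal.ofReal V + ENNReal.ofReal (η * V) := by
    rw [← ENNReal.ofReal_mul (by linarith), ← ENNReal.ofReal_add (by nlinarith) (by positivity)]
    congr 1; ring
  have h3 : volume ((dcube j k : Set (Euc n)) ∩ Am K v Ω) + ENNReal.ofReal (η * V) ≤
      ENNReal.ofReal (1 - η) * ENNReal.ofReal V + ENNReal.ofReal (η * V) := by
    rw [← e, ← h1]; gcongr
  exact ENNReal.le_of_add_le_add_right ENNReal.ofReal_ne_top h3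

lemma am_base {n : ℕ} (hn : 2 ≤ n) {lam Lam : ℝ} (hlam : 0 < lam) (hLam : lam ≤ Lam)
    {Ω : Set (Euc n)} (hΩ : IsOpen Ω) {v : Euc n → ℝ} (hv : ContinuousOn v Ω)
    (hs : ViscSupersol lam Lam Ω v) (hB : closedBall 0 (2 * Real.sqrt n) ⊆ Ω)
    (hbd : ∀ x ∈ Ω, |v x| ≤ 1 / 4) :
    volume (Am (bigM n lam Lam) v Ω ∩ dcube 0 0) ≤ ENNReal.ofReal (1 - smallEta n lam Lam) := by
  have hη := eta_bounds hn hlam hLam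
  have hM := bigM_ge hn lam Lam
  have h := am_small hΩ hv (K := bigM n lam Lam) (by linarith) hη.1.le hη.2 (j := 0) (k := 0) (by
    have e : (dcen 0 0 : Euc n) = 0 := by
      ext i; simp [dcen]
    rw [e]
    simpa using base_est hn hlam hLam hv hs hB hbd)
  rw [vol_dcube] at h
  simpa using h

lemma am_step {n : ℕ} (hn : 2 ≤ n) {lam Lam : ℝ} (hlam : 0 < lam) (hLam : lam ≤ Lam)
    {Ω : Set (Euc n)} (hΩ : IsOpen Ω) {v : Euc n → ℝ} (hv : ContinuousOn v Ω)
    (hs : ViscSupersol lam Lam Ω v) (hB : closedBall 0 (2 * Real.sqrt n) ⊆ Ω) {K : ℝ} (hK : 0 < K)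
    (h0 : volume (Am (bigM n lam Lam * K) v Ω ∩ dcube 0 0) ≤ ENNReal.ofReal (1 - smallEta n lam Lam)) :
    volume (Am (bigM n lam Lam * K) v Ω ∩ dcube 0 0) ≤ ENNReal.ofReal (1 - smallEta n lam Lam) *
      volume (Am K v Ω ∩ dcube 0 0) := by
  have hη := eta_bounds hn hlam hLam
  have hM := bigM_ge hn lam Lam
  have hMK : 0 ≤ bigM n lam Lam * K := by positivity
  apply cz (am_open hΩ hv hMK)
  · rw [ENNReal.ofReal_lt_one]; linarith
  · rw [vol_dcube]; simpa using h0
  · intro j k x hx hk hbad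
    refine ⟨dcube_zero_Ω hB hx, fun hxG => ?_⟩
    refine absurd hbad (not_lt.2 ?_)
    apply am_small hΩ hv hMK hη.1.le hη.2
    have h2 : (0:ℝ) < 2 ^ j := by positivity
    have hr : (1:ℝ) / 2 ^ (j + 1) = 1 / 2 ^ j / 2 := by rw [pow_succ]; field_simp
    have hr1 : (1:ℝ) / 2 ^ j ≤ 1 := by
      rw [div_le_one h2]; exact one_le_pow₀ (by norm_num)
    set r : ℝ := 1 / 2 ^ (j + 1) with hrd
    have hrp : 0 < r := by positivity
    have hxm : x ∈ (dcube j (dpar k) : Set (Euc n)) := hk.symm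
    rw [mem_dcube] at hxm
    have hrj : 1 / 2 ^ j = 2 * r := by rw [hr]; ring
    -- facts coordinatewise
    have hcoord : ∀ i, |x i - dcen (j + 1) k i| ≤ 3 * r / 2 ∧ |dcen (j + 1) k i| ≤ 1 / 2 := by
      intro i
      have hxi := hxm i
      have hx0 := dcube_zero_sub hx i
      have hkk : k i = 2 * (k i / 2) ∨ k i = 2 * (k i / 2) + 1 := by omega
      simp only [dpar] at hxi
      set m := k i / 2 with hm
      have e1 : (m:ℝ) / 2 ^ j = m * (2 * r) := by rw [← hrj]; ring
      have e2 : ((m:ℝ) + 1) / 2 ^ j = (m + 1) * (2 * r) := by rw [← hrj]; ring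
      rw [e1, e2] at hxi
      have e3 : dcen (j + 1) k i = (k i + 1 / 2) * r - 1 / 2 := by
        simp only [dcen, hrd]; ring
      have hm0 : 0 ≤ m := by
        have : (0:ℝ) < m + 1 := by
          by_contra hcon
          push Not at hcon
          have := hxi.2
          nlinarith
        have : 0 < m + 1 := by exact_mod_cast this
        omega
      have hm1 : m + 1 ≤ 2 ^ j := by
        have h3 : (m:ℝ) * (2 * r) < 1 := by linarith [hxi.1]
        rw [← hrj, mul_one_div, div_lt_one h2] at h3
        have : m < 2 ^ j := by exact_mod_cast h3
        omega
      have hm2 : ((m:ℝ) + 1) * (2 * r) ≤ 1 := by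
        rw [← hrj, mul_one_div, div_le_one h2]; exact_mod_cast hm1
      have hm0' : (0:ℝ) ≤ m := by exact_mod_cast hm0
      have hmr : 0 ≤ (m:ℝ) * r := by positivity
      rw [e3]
      rcases hkk with hkk | hkk
      · have hkr : (k i : ℝ) = 2 * m := by exact_mod_cast hkk
        rw [hkr]
        constructor <;> rw [abs_le] <;> constructor <;> nlinarith [hxi.1, hxi.2]
      · have hkr : (k i : ℝ) = 2 * m + 1 := by exact_mod_cast hkk
        rw [hkr]
        constructor <;> rw [abs_le] <;> constructor <;> nlinarith [hxi.1, hxi.2]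
    apply key_est hn hlam hLam hv hs hrp hK _ hxG (fun i => (hcoord i).1)
    refine Set.Subset.trans (closedBall_subset_closedBall' ?_) hB
    rw [dist_eq_norm, sub_zero]
    have := norm_le_of_coord (x := dcen (j + 1) k) (s := 1/2) (by norm_num) (fun i => (hcoord i).2)
    have h4 := Real.sqrt_nonneg (n:ℝ)
    have h5 : r ≤ 1 / 2 := by linarith
    nlinarith

lemma am_mono {n : ℕ} {Ω : Set (Euc n)} {v : Euc n → ℝ} {K L : ℝ} (h : K ≤ L) :
    Am L v Ω ⊆ Am K v Ω := by
  rintro x ⟨hx, hG⟩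
  refine ⟨hx, fun hK => hG ?_⟩
  obtain ⟨_, p, hp⟩ := hK
  refine ⟨hx, p, fun y hy => ?_⟩
  have := hp y hy
  nlinarith [mul_le_mul_of_nonneg_right h (sq_nonneg ‖y - x‖)]

lemma am_iter {n : ℕ} (hn : 2 ≤ n) {lam Lam : ℝ} (hlam : 0 < lam) (hLam : lam ≤ Lam)
    {Ω : Set (Euc n)} (hΩ : IsOpen Ω) {v : Euc n → ℝ} (hv : ContinuousOn v Ω)
    (hs : ViscSupersol lam Lam Ω v) (hB : closedBall 0 (2 * Real.sqrt n) ⊆ Ω)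
    (hbd : ∀ x ∈ Ω, |v x| ≤ 1 / 4) (k : ℕ) :
    volume (Am (bigM n lam Lam ^ (k + 1)) v Ω ∩ dcube 0 0) ≤
      ENNReal.ofReal ((1 - smallEta n lam Lam) ^ (k + 1)) := by
  have hη := eta_bounds hn hlam hLam
  have hM := bigM_ge hn lam Lam
  have hb := am_base hn hlam hLam hΩ hv hs hB hbd
  induction k with
  | zero => simpa using hb
  | succ k ih =>
    have h1 := am_step hn hlam hLam hΩ hv hs hB (K := bigM n lam Lam ^ (k + 1)) (by positivity) (by
      refine (measure_mono (Set.inter_subset_inter_left _ (am_mono ?_))).trans hb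
      have : 1 ≤ bigM n lam Lam ^ (k + 1) := one_le_pow₀ (by linarith)
      nlinarith)
    rw [pow_succ' (bigM n lam Lam) (k + 1), pow_succ' _ (k + 1), ENNReal.ofReal_mul (by linarith)]
    refine h1.trans ?_
    gcongr

lemma stmt_aux {n : ℕ} (hn : 2 ≤ n) {lam Lam : ℝ} (hlam : 0 < lam) (hLam : lam ≤ Lam)
    {Ω : Set (Euc n)} (hΩ : IsOpen Ω) {v : Euc n → ℝ} (hv : ContinuousOn v Ω)
    (hs : ViscSupersol lam Lam Ω v) (hB : closedBall 0 (2 * Real.sqrt n) ⊆ Ω)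
    (hbd : ∀ x ∈ Ω, |v x| ≤ 1 / 4) (t : ℝ) (ht : t > bigM n lam Lam) :
    volume (Am t v Ω ∩ cube 1 0) ≤ ENNReal.ofReal ((1 - smallEta n lam Lam)⁻¹ *
      t ^ (-(Real.log (1 / (1 - smallEta n lam Lam)) / Real.log (bigM n lam Lam)))) := by
  have hη := eta_bounds hn hlam hLam
  have hM := bigM_ge hn lam Lam
  have hit := am_iter hn hlam hLam hΩ hv hs hB hbd
  set M := bigM n lam Lam
  set σ := 1 - smallEta n lam Lam with hσ
  have hσ0 : 0 < σ := by linarith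
  have hσ1 : σ < 1 := by linarith
  have ht0 : 0 < t := by linarith
  obtain ⟨m, hm1, hm2⟩ := exists_nat_pow_near (x := t) (y := M) (by linarith) (by linarith)
  have hm : m ≠ 0 := by
    rintro rfl
    rw [zero_add, pow_one] at hm2
    linarith
  obtain ⟨k, rfl⟩ := Nat.exists_eq_succ_of_ne_zero hm
  have hsub : Am t v Ω ∩ cube 1 0 ⊆ Am (M ^ (k + 1)) v Ω ∩ dcube 0 0 := by
    apply Set.inter_subset_inter (am_mono hm1)
    have e : (dcen 0 0 : Euc n) = 0 := by
      ext i; simp [dcen]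
    have := cube_sub_dcube (n := n) 0 0
    rw [e] at this
    simpa using this
  refine (measure_mono hsub).trans ((hit k).trans (ENNReal.ofReal_le_ofReal ?_))
  have hlM : 0 < Real.log M := Real.log_pos (by linarith)
  have hlt : Real.log t ≤ (k + 2) * Real.log M := by
    have := Real.log_le_log ht0 hm2.le
    rw [Real.log_pow] at this
    push_cast at this
    linarith
  have e1 : t ^ (-(Real.log (1 / σ) / Real.log M)) = Real.exp (Real.log σ * (Real.log t / Real.log M)) := by
    rw [Real.rpow_def_of_pos ht0, one_div, Real.log_inv]
    congr 1; ring
  have e2 : σ ^ (k + 1) = σ⁻¹ * Real.exp (Real.log σ * (k + 2)) := by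
    have : Real.log σ * ((k:ℝ) + 2) = ((k + 2 : ℕ) : ℝ) * Real.log σ := by push_cast; ring
    rw [this, Real.exp_nat_mul, Real.exp_log hσ0]
    field_simp
    ring
  rw [e1, e2]
  apply mul_le_mul_of_nonneg_left _ (by positivity)
  apply Real.exp_le_exp.2
  apply mul_le_mul_of_nonpos_left _ (Real.log_neg hσ0 hσ1).le
  rw [div_le_iff₀ hlM]
  exact hlt

/-- power decay |A⁻_t(v,Ω) ∩ Q₁| ≤ σ⁻¹ t^{−ε}, ε = log(1/σ)/log M. -/
theorem stmt_12 (n : ℕ) (hn : 2 ≤ n) (lam Lam : ℝ) (hlam : 0 < lam) (hLam : lam ≤ Lam)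
    (Ω : Set (Euc n)) (hΩ : IsOpen Ω) (hB : closedBall 0 (2 * Real.sqrt n) ⊆ Ω)
    (v : Euc n → ℝ) (hv : ContinuousOn v Ω) (hsuper : ViscSupersol lam Lam Ω v)
    (hbd : ∀ x ∈ Ω, |v x| ≤ 1 / 4) :
    ∀ t : ℝ,
      t > 884736 * (n : ℝ) ^ 3 *
          (36 * (n : ℝ)) ^ (max (1 : ℝ) (((n : ℝ) - 1) * Lam / lam - 1)) →
      volume (Am t v Ω ∩ cube 1 0) ≤
        ENNReal.ofReal
          ((1 - (lam / (lam + ((n : ℝ) - 1) * Lam)) ^ n * (1 / (4 * Real.sqrt n)) ^ n)⁻¹ *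
            t ^ (-(Real.log
                (1 / (1 - (lam / (lam + ((n : ℝ) - 1) * Lam)) ^ n * (1 / (4 * Real.sqrt n)) ^ n)) /
              Real.log (884736 * (n : ℝ) ^ 3 *
                (36 * (n : ℝ)) ^ (max (1 : ℝ) (((n : ℝ) - 1) * Lam / lam - 1)))))) := by
  intro t ht
  exact stmt_aux hn hlam hLam hΩ hv hsuper hB hbd t ht
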